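/- arXiv:1212.4435 — 2 statements merged into one kernel-verified Lean document; each statement's English description precedes it below -/
import Mathlib

section
/- Let ν be the unique probability measure on LO_0 invariant for the process seen from the front (i.e. Q_t ν = ν for all t ≥ 0, where Q_t π is the pushforward under θ of ∫ P_t(ω,·) dπ(ω)), and set v = p·ν({η : η_1 = 0}) − q. Then for every ω ∈ LO_0 and every ε > 0: P_t(ω, {η ∈ LO : |X(η)/t − v| > ε}) → 0 as t → ∞. (Law of large numbers for the front: X(ω(t))/t → v in P_ω-probability.) -/
open MeasureTheory ProbabilityTheory Filter Topology

noncomputable section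

/-- The configuration space of the East model on `ℤ`: `0` ↔ `false` (empty), `1` ↔ `true`. -/
abbrev Config : Type := ℤ → Bool

/-- The configuration `ω` flipped at site `x`. -/
def flipAt (ω : Config) (x : ℤ) : Config := fun y => if y = x then !ω x else ω y

/-- `f` depends only on the coordinates in `S`. -/
def DependsOnF (f : Config → ℝ) (S : Set ℤ) : Prop :=
  ∀ ω ω' : Config, (∀ x ∈ S, ω x = ω' x) → f ω = f ω'

/-- The set `A` depends only on the coordinates in `S`. -/
def DependsOnSet (A : Set Config) (S : Set ℤ) : Prop :=
  ∀ ω ω' : Config, (∀ x ∈ S, ω x = ω' x) → (ω ∈ A ↔ ω' ∈ A)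

/-- A cylinder (local) function: depends on finitely many coordinates. -/
def IsCylinder (f : Config → ℝ) : Prop := ∃ S : Finset ℤ, DependsOnF f ↑S

/-- The East generator at density `p` of ones. -/
def eastGen (p : ℝ) (f : Config → ℝ) (ω : Config) : ℝ :=
  ∑' x : ℤ, (if ω (x + 1) = false then (1 : ℝ) else 0) *
    (if ω x = false then p else 1 - p) * (f (flipAt ω x) - f ω)

/-- Spatial translation: `(shift y ω) x = ω (x + y)`. -/
def shift (y : ℤ) (ω : Config) : Config := fun x => ω (x + y)

/-- Left-occupied configurations: identically `1` on a left half-line, with an empty site. -/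
def LO : Set Config := {ω | (∃ y : ℤ, ∀ x < y, ω x = true) ∧ ∃ x, ω x = false}

/-- The front: position of the left-most zero. -/
def front (ω : Config) : ℤ := sInf {x : ℤ | ω x = false}

/-- Left-occupied configurations with front at the origin. -/
def LO₀ : Set Config := {ω ∈ LO | front ω = 0}

/-- The configuration seen at distance `L` behind the front. -/
def θL (L : ℤ) (ω : Config) : Config := fun x =>
  if x < 0 then true else if x = 0 then false else ω (front ω + L + x)

/-- `f` averaged over the coordinate at site `1` w.r.t. Bernoulli(p). -/
def avg1 (p : ℝ) (f : Config → ℝ) (ω : Config) : ℝ :=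
  p * f (Function.update ω 1 true) + (1 - p) * f (Function.update ω 1 false)

/-- The East process on `ℤ` at density `p`, together with its equilibrium measure. -/
structure EastProcess where
  /-- equilibrium density of ones -/
  p : ℝ
  hp0 : 0 < p
  hp1 : p < 1
  /-- the Markov semigroup -/
  P : ℝ → Kernel Config Config
  markov : ∀ t : ℝ, IsMarkovKernel (P t)
  P0 : P 0 = Kernel.id
  semigroup : ∀ s t : ℝ, 0 ≤ s → 0 ≤ t → P (t + s) = (P s).comp (P t)
  feller : ∀ t : ℝ, 0 ≤ t → ∀ f : Config → ℝ, Continuous f →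
    Continuous fun ω : Config => ∫ η, f η ∂(P t ω)
  timeCont : ∀ f : Config → ℝ, Continuous f → ∀ ω : Config,
    Continuous fun t : ℝ => ∫ η, f η ∂(P t ω)
  shiftComm : ∀ t : ℝ, 0 ≤ t → ∀ y : ℤ, ∀ ω : Config,
    P t (shift y ω) = Measure.map (shift y) (P t ω)
  generator : ∀ f : Config → ℝ, IsCylinder f → ∀ ω : Config,
    HasDerivWithinAt (fun u : ℝ => ∫ η, f η ∂(P u ω)) (eastGen p f ω) (Set.Ici 0) 0
  /-- the product Bernoulli(p) measure -/
  μ : Measure Config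
  μprob : IsProbabilityMeasure μ
  μprod : ∀ (S : Finset ℤ) (σ : ℤ → Bool),
    μ {ω : Config | ∀ x ∈ S, ω x = σ x} = ∏ x ∈ S, ENNReal.ofReal (if σ x then p else 1 - p)
  /-- LO is stable for the dynamics -/
  loStable : ∀ t : ℝ, 0 ≤ t → ∀ ω ∈ LO, P t ω LO = 1

/-- The set of Rayleigh quotients defining the spectral gap. -/
def gapSet (E : EastProcess) : Set ℝ :=
  {r | ∃ f : Config → ℝ, IsCylinder f ∧ 0 < variance f E.μ ∧
    r = (-∫ ω, f ω * eastGen E.p f ω ∂E.μ) / variance f E.μ}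

/-- The spectral gap of the East process. -/
def gap (E : EastProcess) : ℝ := sInf (gapSet E)

/-- The product measure `μ̃`: all ones on the negative half-line, a zero at the origin,
Bernoulli(p) on the positive half-line. -/
def IsMuTilde (p : ℝ) (μt : Measure Config) : Prop :=
  IsProbabilityMeasure μt ∧
  ∀ (S : Finset ℤ) (σ : ℤ → Bool),
    μt {ω : Config | ∀ x ∈ S, ω x = σ x} =
      ∏ x ∈ S, ENNReal.ofReal
        (if x < 0 then (if σ x then 1 else 0)
         else if x = 0 then (if σ x then 0 else 1)
         else (if σ x then p else 1 - p))

/-- The law at time `t` of the process seen from the front started from `π`. -/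
def Qt (E : EastProcess) (t : ℝ) (π : Measure Config) : Measure Config :=
  Measure.map (θL 0) (π.bind fun ω => E.P t ω)



namespace EastLLN

lemma continuous_of_cylinder {f : Config → ℝ} (hf : IsCylinder f) : Continuous f := by
  obtain ⟨S, hS⟩ := hf
  rw [continuous_iff_continuousAt]
  intro ω
  have : ∀ᶠ ω' in 𝓝 ω, f ω' = f ω := by
    have h1 : ∀ᶠ ω' : Config in 𝓝 ω, ∀ x ∈ S, ω' x = ω x := by
      rw [Filter.eventually_all_finset]
      intro x _
      have : Tendsto (fun ω' : Config => ω' x) (𝓝 ω) (𝓝 (ω x)) :=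
        (continuous_apply x).continuousAt
      rw [nhds_discrete Bool, tendsto_pure] at this
      exact this
    filter_upwards [h1] with ω' h
    exact hS _ _ (fun x hx => h x hx)
  exact (tendsto_congr' this).2 tendsto_const_nhds

lemma continuous_flipAt (x : ℤ) : Continuous (fun ω : Config => flipAt ω x) := by
  refine continuous_pi fun y => ?_
  unfold flipAt
  by_cases h : y = x
  · simp only [h, if_true]
    exact (continuous_of_discreteTopology (f := fun b : Bool => !b)).comp (continuous_apply x)
  · simp only [h, if_false]
    exact continuous_apply y

lemma continuous_bool (x : ℤ) (g : Bool → ℝ) : Continuous (fun ω : Config => g (ω x)) :=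
  continuous_of_discreteTopology.comp (continuous_apply x)

lemma continuous_eastGen (p : ℝ) {f : Config → ℝ} (hf : IsCylinder f) :
    Continuous (eastGen p f) := by
  have hc := continuous_of_cylinder hf
  obtain ⟨S, hS⟩ := hf
  have : eastGen p f = fun ω => ∑ x ∈ S, (if ω (x + 1) = false then (1 : ℝ) else 0) *
    (if ω x = false then p else 1 - p) * (f (flipAt ω x) - f ω) := by
    funext ω
    unfold eastGen
    refine tsum_eq_sum fun x hx => ?_
    have : f (flipAt ω x) = f ω := by
      refine hS _ _ fun y hy => ?_
      have : y ≠ x := by rintro rfl; exact hx hy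
      simp [flipAt, this]
    rw [this]; simp
  rw [this]
  refine continuous_finsetSum _ fun x _ => ?_
  refine ((continuous_bool (x+1) (fun b => if b = false then (1:ℝ) else 0)).mul
    (continuous_bool x (fun b => if b = false then p else 1 - p))).mul ?_
  exact (hc.comp (continuous_flipAt x)).sub hc

variable (E : EastProcess)

instance (t : ℝ) : IsMarkovKernel (E.P t) := E.markov t

/-- action of the semigroup on functions -/
def Pf (t : ℝ) (f : Config → ℝ) (ω : Config) : ℝ := ∫ η, f η ∂(E.P t ω)

lemma exists_bound {f : Config → ℝ} (hf : Continuous f) : ∃ C, 0 ≤ C ∧ ∀ ω, |f ω| ≤ C := by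
  obtain ⟨C, hC⟩ := isCompact_univ.exists_bound_of_continuousOn hf.continuousOn
  refine ⟨max C 0, le_max_right _ _, fun ω => ?_⟩
  exact (hC ω trivial).trans (le_max_left _ _)

lemma integrable_cont {f : Config → ℝ} (hf : Continuous f) (m : Measure Config)
    [IsFiniteMeasure m] : Integrable f m := by
  obtain ⟨C, _, hC⟩ := exists_bound hf
  exact Integrable.of_bound hf.measurable.aestronglyMeasurable C
    (Eventually.of_forall hC)

lemma abs_integral_le {f : Config → ℝ} {C : ℝ} (hC : ∀ ω, |f ω| ≤ C) (m : Measure Config)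
    [IsProbabilityMeasure m] : |∫ η, f η ∂m| ≤ C := by
  have := norm_integral_le_of_norm_le_const (μ := m) (f := f) (C := C)
    (Eventually.of_forall hC)
  simpa using this

lemma Pf_semigroup {s t : ℝ} (hs : 0 ≤ s) (ht : 0 ≤ t) {f : Config → ℝ} (hf : Continuous f)
    (ω : Config) : Pf E t (Pf E s f) ω = Pf E (t + s) f ω := by
  unfold Pf
  rw [E.semigroup s t hs ht]
  rw [Kernel.integral_comp]
  have := E.markov s
  have := E.markov t
  exact integrable_cont hf _

/-- maximum principle -/
lemma max_principle {w : Config → ℝ} (hw : Continuous w) {l : ℝ} (hl : 0 < l)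
    (hd : ∀ ω, HasDerivWithinAt (fun h => Pf E h w ω) (l * w ω) (Set.Ici 0) 0) :
    ∀ ω, w ω ≤ 0 := by
  obtain ⟨ω₀, -, hmax⟩ := isCompact_univ.exists_isMaxOn (Set.univ_nonempty) hw.continuousOn
  have hmax' : ∀ ω, w ω ≤ w ω₀ := fun ω => hmax (Set.mem_univ ω)
  suffices w ω₀ ≤ 0 from fun ω => (hmax' ω).trans this
  by_contra hpos
  push Not at hpos
  have h0 : Pf E 0 w ω₀ = w ω₀ := by
    simp only [Pf, E.P0, Kernel.id_apply]
    exact integral_dirac _ _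
  have h1 := (hasDerivWithinAt_iff_tendsto_slope.1 (hd ω₀))
  have : Set.Ici (0:ℝ) \ {0} = Set.Ioi 0 := by
    ext x; simp [lt_iff_le_and_ne, eq_comm]
  rw [this] at h1
  have h2 : l * w ω₀ ≤ 0 := by
    refine le_of_tendsto h1 ?_
    filter_upwards [self_mem_nhdsWithin] with h hh
    have hh : 0 < h := hh
    rw [slope_def_field, h0]
    refine div_nonpos_of_nonpos_of_nonneg ?_ (by linarith)
    rw [sub_nonpos]
    have h3 : Pf E h w ω₀ ≤ ∫ η, w ω₀ ∂(E.P h ω₀) :=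
      integral_mono (integrable_cont hw _) (integrable_const _) hmax'
    simpa using h3
  nlinarith

lemma Pf_cont_t {f : Config → ℝ} (hf : Continuous f) (ω : Config) :
    Continuous fun t => Pf E t f ω := E.timeCont f hf ω

lemma resolvent_integrable {g : Config → ℝ} (hg : Continuous g) {l : ℝ} (hl : 0 < l) (ω : Config)
    (a : ℝ) : IntegrableOn (fun s => Real.exp (-l * s) * Pf E s g ω) (Set.Ioi a) := by
  obtain ⟨C, hC0, hC⟩ := exists_bound hg
  have h1 : IntegrableOn (fun s : ℝ => Real.exp (-l * s) * C) (Set.Ioi a) :=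
    (exp_neg_integrableOn_Ioi a hl).mul_const C
  refine Integrable.mono' h1 ?_ ?_
  · have := Pf_cont_t E hg ω
    exact (by fun_prop : Continuous _).aestronglyMeasurable
  · refine Eventually.of_forall fun s => ?_
    rw [norm_mul, Real.norm_eq_abs, Real.abs_exp]
    gcongr
    exact abs_integral_le hC _

/-- the resolvent -/
def res (l : ℝ) (g : Config → ℝ) (ω : Config) : ℝ :=
  ∫ s in Set.Ioi (0:ℝ), Real.exp (-l * s) * Pf E s g ω

lemma res_continuous {g : Config → ℝ} (hg : Continuous g) {l : ℝ} (hl : 0 < l) :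
    Continuous (res E l g) := by
  obtain ⟨C, hC0, hC⟩ := exists_bound hg
  unfold res
  refine continuous_of_dominated (bound := fun s => Real.exp (-l * s) * C) ?_ ?_ ?_ ?_
  · exact fun ω => (resolvent_integrable E hg hl ω 0).aestronglyMeasurable
  · intro ω
    refine Eventually.of_forall fun s => ?_
    rw [norm_mul, Real.norm_eq_abs, Real.abs_exp]
    gcongr
    exact abs_integral_le hC _
  · exact (exp_neg_integrableOn_Ioi 0 hl).mul_const C
  · filter_upwards [ae_restrict_mem measurableSet_Ioi] with s hs
    exact continuous_const.mul (E.feller s (le_of_lt hs) g hg)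

lemma Pf_res {g : Config → ℝ} (hg : Continuous g) {l : ℝ} (hl : 0 < l) {h : ℝ} (hh : 0 ≤ h)
    (ω : Config) : Pf E h (res E l g) ω =
      Real.exp (l * h) * (res E l g ω - ∫ s in (0:ℝ)..h, Real.exp (-l * s) * Pf E s g ω) := by
  obtain ⟨C, hC0, hC⟩ := exists_bound hg
  have e1 : Pf E h (res E l g) ω =
      ∫ s in Set.Ioi (0:ℝ), ∫ η, Real.exp (-l * s) * Pf E s g η ∂(E.P h ω) := by
    unfold Pf res
    refine integral_integral_swap ?_
    refine Integrable.mono' (g := fun z : Config × ℝ => Real.exp (-l * z.2) * C) ?_ ?_ ?_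
    · exact ((exp_neg_integrableOn_Ioi 0 hl).mul_const C).comp_snd _
    · have : StronglyMeasurable (Function.uncurry fun (s : ℝ) (η : Config) => Pf E s g η) := by
        refine stronglyMeasurable_uncurry_of_continuous_of_stronglyMeasurable ?_ ?_
        · exact fun η => Pf_cont_t E hg η
        · exact fun s => StronglyMeasurable.integral_kernel
            (κ := E.P s) hg.stronglyMeasurable
      have h2 : StronglyMeasurable (fun z : Config × ℝ => Real.exp (-l * z.2) * Pf E z.2 g z.1) := by
        refine StronglyMeasurable.mul ?_ (this.comp_measurable measurable_swap)
        exact (by fun_prop : Continuous fun z : Config × ℝ => Real.exp (-l * z.2)).stronglyMeasurable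
      exact h2.aestronglyMeasurable
    · refine Eventually.of_forall fun z => ?_
      simp only [Function.uncurry]
      rw [norm_mul, Real.norm_eq_abs, Real.abs_exp]
      gcongr
      exact abs_integral_le hC _
  have e2 : Pf E h (res E l g) ω =
      ∫ s in Set.Ioi (0:ℝ), Real.exp (l * h) * (Real.exp (-l * (s + h)) * Pf E (s + h) g ω) := by
    rw [e1]
    refine setIntegral_congr_fun measurableSet_Ioi fun s hs => ?_
    have hs : 0 < s := hs
    rw [integral_const_mul, ← mul_assoc, ← Real.exp_add]
    have := Pf_semigroup E hs.le hh hg ω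
    rw [add_comm s h, ← this]
    unfold Pf
    congr 2
    ring
  rw [e2, integral_const_mul]
  congr 1
  have e3 : ∫ s in Set.Ioi (0:ℝ), (Real.exp (-l * (s + h)) * Pf E (s + h) g ω) =
      ∫ s in Set.Ioi h, (Real.exp (-l * s) * Pf E s g ω) := by
    have := (measurePreserving_add_right volume h).setIntegral_preimage_emb
      (measurableEmbedding_addRight h) (fun s => Real.exp (-l * s) * Pf E s g ω) (Set.Ioi h)
    simpa using this
  rw [e3, eq_sub_iff_add_eq, add_comm]
  exact intervalIntegral.integral_interval_add_Ioi (resolvent_integrable E hg hl ω 0)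
    (resolvent_integrable E hg hl ω h)

lemma res_deriv {g : Config → ℝ} (hg : Continuous g) {l : ℝ} (hl : 0 < l) (ω : Config) :
    HasDerivWithinAt (fun h => Pf E h (res E l g) ω) (l * res E l g ω - g ω) (Set.Ici 0) 0 := by
  have hcont : Continuous fun s => Real.exp (-l * s) * Pf E s g ω := by
    have := Pf_cont_t E hg ω
    fun_prop
  have h0 : Pf E 0 g ω = g ω := by
    simp only [Pf, E.P0, Kernel.id_apply]
    exact integral_dirac _ _
  have d1 : HasDerivAt (fun h => ∫ s in (0:ℝ)..h, Real.exp (-l * s) * Pf E s g ω) (g ω) 0 := by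
    have := intervalIntegral.integral_hasDerivAt_right (hcont.intervalIntegrable 0 0)
      hcont.aestronglyMeasurable.stronglyMeasurableAtFilter hcont.continuousAt
    simpa [h0] using this
  have d2 : HasDerivAt (fun h => Real.exp (l * h)) l 0 := by
    have := ((hasDerivAt_id (0:ℝ)).const_mul l).exp
    simpa using this
  have d3 := d2.mul (d1.const_sub (res E l g ω))
  simp only [intervalIntegral.integral_same, mul_zero, Real.exp_zero, one_mul, sub_zero] at d3
  refine (d3.hasDerivWithinAt (s := Set.Ici 0)).congr_of_mem ?_ ?_ |>.congr_deriv ?_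
  · intro h hh
    exact Pf_res E hg hl hh ω
  · simp
  · ring

lemma dynkin_pos {f : Config → ℝ} (hf : IsCylinder f) {l : ℝ} (hl : 0 < l) {t : ℝ} (ht : 0 ≤ t)
    (ω : Config) : Real.exp (-l * t) * Pf E t f ω =
      f ω - ∫ s in (0:ℝ)..t, Real.exp (-l * s) * (l * Pf E s f ω - Pf E s (eastGen E.p f) ω) := by
  have hfc := continuous_of_cylinder hf
  have hLc := continuous_eastGen E.p hf
  set g : Config → ℝ := fun ω => l * f ω - eastGen E.p f ω with hgdef
  have hg : Continuous g := (continuous_const.mul hfc).sub hLc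
  have hu := res_continuous E hg hl
  have hPg : ∀ s ω, Pf E s g ω = l * Pf E s f ω - Pf E s (eastGen E.p f) ω := by
    intro s ω
    unfold Pf
    rw [← integral_const_mul, ← integral_sub ((integrable_cont hfc _).const_mul l)
      (integrable_cont hLc _)]
  have key1 : ∀ ω, HasDerivWithinAt (fun h => Pf E h (fun ω => res E l g ω - f ω) ω)
      (l * (res E l g ω - f ω)) (Set.Ici 0) 0 := by
    intro ω
    have := (res_deriv E hg hl ω).sub (E.generator f hf ω)
    refine (this.congr_of_mem (fun h _ => ?_) (by simp)).congr_deriv (by simp [hgdef]; ring)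
    unfold Pf
    exact integral_sub (integrable_cont hu _) (integrable_cont hfc _)
  have key2 : ∀ ω, HasDerivWithinAt (fun h => Pf E h (fun ω => -(res E l g ω - f ω)) ω)
      (l * -(res E l g ω - f ω)) (Set.Ici 0) 0 := by
    intro ω
    refine ((key1 ω).neg.congr_of_mem (fun h _ => ?_) (by simp)).congr_deriv (by ring)
    unfold Pf
    exact integral_neg _
  have m1 := max_principle E (hu.sub hfc) hl key1
  have m2 := max_principle E (hu.sub hfc).neg hl key2
  have hEq : res E l g = f := by
    funext ω
    have h1 : res E l g ω - f ω ≤ 0 := m1 ω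
    have h2 : -(res E l g ω - f ω) ≤ 0 := m2 ω
    linarith
  have h3 := Pf_res E hg hl ht ω
  rw [hEq] at h3
  rw [h3, ← mul_assoc, ← Real.exp_add]
  simp only [neg_mul, neg_add_cancel, Real.exp_zero, one_mul, hPg]

/-- Dynkin's formula for cylinder functions. -/
lemma dynkin {f : Config → ℝ} (hf : IsCylinder f) {t : ℝ} (ht : 0 ≤ t)
    (ω : Config) : Pf E t f ω = f ω + ∫ s in (0:ℝ)..t, Pf E s (eastGen E.p f) ω := by
  have c1 := Pf_cont_t E (continuous_of_cylinder hf) ω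
  have c2 := Pf_cont_t E (continuous_eastGen E.p hf) ω
  have hE : Set.EqOn (fun l : ℝ => Real.exp (-l * t) * Pf E t f ω) (fun l : ℝ =>
      f ω - ∫ s in (0:ℝ)..t, Real.exp (-l * s) * (l * Pf E s f ω - Pf E s (eastGen E.p f) ω))
      (Set.Ioi 0) := fun l hl => dynkin_pos E hf hl ht ω
  have := hE.closure (by fun_prop) (by
    refine continuous_const.sub ?_
    refine intervalIntegral.continuous_parametric_intervalIntegral_of_continuous' ?_ _ _
    simp only [Function.uncurry_def]
    fun_prop)
  rw [closure_Ioi] at this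
  have h0 := this (Set.mem_Ici.2 (le_refl (0:ℝ)))
  simpa using h0

/-- Gronwall form: if `Lf ≤ l f` then `P_t f ≤ e^{lt} f`. -/
lemma gronwall {f : Config → ℝ} (hf : IsCylinder f) {l : ℝ} (hl : 0 < l) {t : ℝ} (ht : 0 ≤ t)
    (hL : ∀ ω, eastGen E.p f ω ≤ l * f ω) (ω : Config) :
    Pf E t f ω ≤ Real.exp (l * t) * f ω := by
  have h1 := dynkin_pos E hf hl ht ω
  have h2 : 0 ≤ ∫ s in (0:ℝ)..t, Real.exp (-l * s) *
      (l * Pf E s f ω - Pf E s (eastGen E.p f) ω) := by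
    refine intervalIntegral.integral_nonneg ht fun s _ => ?_
    refine mul_nonneg (Real.exp_pos _).le ?_
    rw [sub_nonneg]
    unfold Pf
    rw [← integral_const_mul]
    exact integral_mono (integrable_cont (continuous_eastGen E.p hf) _)
      ((integrable_cont (continuous_of_cylinder hf) _).const_mul l) hL
  have h3 : Real.exp (-l * t) * Pf E t f ω ≤ f ω := by linarith
  calc Pf E t f ω = Real.exp (l * t) * (Real.exp (-l * t) * Pf E t f ω) := by
        rw [← mul_assoc, ← Real.exp_add]; simp
    _ ≤ _ := by gcongr

end EastLLN


namespace EastLLN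

lemma front_eq_iff {ω : Config} {m : ℤ} (h0 : ω m = false) (h1 : ∀ x < m, ω x = true) :
    front ω = m := by
  unfold front
  refine IsLeast.csInf_eq ⟨h0, fun x hx => ?_⟩
  by_contra hlt
  push Not at hlt
  have := h1 x hlt
  simp_all

lemma exists_front {ω : Config} (h : ω ∈ LO) : ∃ m : ℤ, ω m = false ∧ ∀ x < m, ω x = true := by
  obtain ⟨⟨y, hy⟩, x, hx⟩ := h
  have := Int.exists_least_of_bdd (P := fun z => ω z = false)
    ⟨y, fun z hz => by by_contra hlt; push Not at hlt; simp [hy z hlt] at hz⟩ ⟨x, hx⟩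
  obtain ⟨m, hm, hl⟩ := this
  refine ⟨m, hm, fun z hz => ?_⟩
  by_contra hf
  have := hl z (by simpa using hf)
  omega

lemma front_spec {ω : Config} (h : ω ∈ LO) : ω (front ω) = false ∧ ∀ x < front ω, ω x = true := by
  obtain ⟨m, h0, h1⟩ := exists_front h
  rw [front_eq_iff h0 h1]
  exact ⟨h0, h1⟩

lemma mem_LO {ω : Config} {m : ℤ} (h0 : ω m = false) (h1 : ∀ x < m, ω x = true) : ω ∈ LO :=
  ⟨⟨m, h1⟩, m, h0⟩

lemma measurableSet_at (m : ℤ) : MeasurableSet {ω : Config | ω m = false ∧ ∀ x < m, ω x = true} := by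
  have : {ω : Config | ω m = false ∧ ∀ x < m, ω x = true} =
      {ω | ω m = false} ∩ ⋂ x : ℤ, ⋂ (_ : x < m), {ω | ω x = true} := by
    ext; simp
  rw [this]
  refine MeasurableSet.inter (measurableSet_eq_fun (measurable_pi_apply m) measurable_const) ?_
  exact MeasurableSet.iInter fun x => MeasurableSet.iInter fun _ =>
    measurableSet_eq_fun (measurable_pi_apply x) measurable_const

lemma LO_eq : LO = ⋃ m : ℤ, {ω : Config | ω m = false ∧ ∀ x < m, ω x = true} := by
  ext ω
  simp only [Set.mem_iUnion, Set.mem_ofPred_eq]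
  exact ⟨exists_front, fun ⟨m, h0, h1⟩ => mem_LO h0 h1⟩

lemma measurableSet_LO : MeasurableSet LO := by
  rw [LO_eq]; exact MeasurableSet.iUnion measurableSet_at

lemma front_not_LO {ω : Config} (h : ω ∉ LO) : front ω = 0 := by
  unfold front
  by_cases hn : {x : ℤ | ω x = false}.Nonempty
  · by_cases hb : BddBelow {x : ℤ | ω x = false}
    · exfalso
      obtain ⟨y, hy⟩ := hb
      obtain ⟨x, hx⟩ := hn
      refine h ⟨⟨y, fun z hz => ?_⟩, x, hx⟩
      by_contra hf
      have := hy (show z ∈ {x : ℤ | ω x = false} by simpa using hf)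
      omega
    · exact Int.csInf_of_not_bddBelow hb
  · rw [Set.not_nonempty_iff_eq_empty.1 hn]
    exact Int.csInf_empty

lemma measurable_front : Measurable front := by
  refine measurable_to_countable' fun m => ?_
  have : front ⁻¹' {m} = {ω : Config | ω m = false ∧ ∀ x < m, ω x = true} ∪
      (LOᶜ ∩ {_ω | m = 0}) := by
    ext ω
    simp only [Set.mem_preimage, Set.mem_singleton_iff, Set.mem_union, Set.mem_ofPred_eq,
      Set.mem_inter_iff, Set.mem_compl_iff]
    constructor
    · rintro rfl
      by_cases h : ω ∈ LO
      · exact Or.inl (front_spec h)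
      · exact Or.inr ⟨h, front_not_LO h⟩
    · rintro (⟨h0, h1⟩ | ⟨h, rfl⟩)
      · exact front_eq_iff h0 h1
      · exact front_not_LO h
  rw [this]
  exact (measurableSet_at m).union (measurableSet_LO.compl.inter (MeasurableSet.const _))

/-- retraction on `LO₀` -/
def R (ω : Config) : Config := fun x => if x < 0 then true else if x = 0 then false else ω x

lemma continuous_R : Continuous R := by
  refine continuous_pi fun x => ?_
  unfold R
  split_ifs
  · exact continuous_const
  · exact continuous_const
  · exact continuous_apply x

lemma R_mem (ω : Config) : R ω ∈ LO ∧ front (R ω) = 0 := by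
  have h0 : R ω 0 = false := by simp [R]
  have h1 : ∀ x < 0, R ω x = true := fun x hx => by simp [R, hx]
  exact ⟨mem_LO h0 h1, front_eq_iff h0 h1⟩

lemma R_of_LO0 {ω : Config} (h : ω ∈ LO₀) : R ω = ω := by
  obtain ⟨h, h'⟩ := h
  have := front_spec h
  rw [h'] at this
  funext x
  unfold R
  split_ifs with h1 h2
  · exact (this.2 x h1).symm
  · rw [h2]; exact this.1.symm
  · rfl

lemma theta_eq (ω : Config) : θL 0 ω = R (shift (front ω) ω) := by
  funext x
  simp only [θL, R, shift, add_zero]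
  rw [add_comm]

lemma R_theta (ω : Config) : R (θL 0 ω) = θL 0 ω := by
  rw [theta_eq]
  funext x
  simp only [R]
  split_ifs <;> rfl

lemma shift_LO {ω : Config} (h : ω ∈ LO) (y : ℤ) :
    shift y ω ∈ LO ∧ front (shift y ω) = front ω - y := by
  obtain ⟨h0, h1⟩ := front_spec h
  have h0' : shift y ω (front ω - y) = false := by simpa [shift] using h0
  have h1' : ∀ x < front ω - y, shift y ω x = true := fun x hx => h1 _ (by omega)
  exact ⟨mem_LO h0' h1', front_eq_iff h0' h1'⟩

lemma theta_LO {ω : Config} (h : ω ∈ LO) : θL 0 ω = shift (front ω) ω := by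
  rw [theta_eq]
  refine R_of_LO0 ⟨(shift_LO h _).1, ?_⟩
  rw [(shift_LO h _).2]; simp

lemma shift_shift (y z : ℤ) (ω : Config) : shift y (shift z ω) = shift (y + z) ω := by
  funext x; simp [shift, add_assoc]

lemma theta_shift {ω : Config} (h : ω ∈ LO) (y : ℤ) : θL 0 (shift y ω) = θL 0 ω := by
  rw [theta_LO h, theta_LO (shift_LO h y).1, shift_shift, (shift_LO h y).2]
  simp

lemma continuous_shift_prod : Continuous fun z : ℤ × Config => shift z.1 z.2 := by
  rw [continuous_prod_of_discrete_left]
  intro y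
  exact continuous_pi fun x => continuous_apply (x + y)

lemma continuous_shift (y : ℤ) : Continuous (shift y) :=
  continuous_pi fun x => continuous_apply (x + y)

lemma measurable_theta : Measurable (θL 0) := by
  have : θL 0 = fun ω => R ((fun z : ℤ × Config => shift z.1 z.2) (front ω, ω)) := by
    funext ω; exact theta_eq ω
  rw [this]
  exact continuous_R.measurable.comp (continuous_shift_prod.measurable.comp
    (measurable_front.prodMk measurable_id))

/-- clamped configuration -/
def cl (N : ℕ) (ω : Config) : Config := fun x =>
  if x < -(N:ℤ) then true else if (N:ℤ) < x then false else ω x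

lemma cl_LO (N : ℕ) (ω : Config) : cl N ω ∈ LO := by
  refine ⟨⟨-(N:ℤ), fun x hx => by simp [cl, hx]⟩, N + 1, ?_⟩
  unfold cl
  rw [if_neg (by omega), if_pos (by omega)]

/-- truncated front -/
def XN (N : ℕ) (ω : Config) : ℤ := front (cl N ω)

lemma XN_spec (N : ℕ) (ω : Config) : -(N:ℤ) ≤ XN N ω ∧ XN N ω ≤ N + 1 ∧
    (XN N ω ≤ N → ω (XN N ω) = false) ∧ ∀ x, -(N:ℤ) ≤ x → x < XN N ω → ω x = true := by
  obtain ⟨h0, h1⟩ := front_spec (cl_LO N ω)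
  change cl N ω (XN N ω) = false at h0
  change ∀ x < XN N ω, _ at h1
  have a1 : -(N:ℤ) ≤ XN N ω := by
    by_contra h
    push Not at h
    unfold cl at h0
    rw [if_pos h] at h0
    simp at h0
  have a2 : XN N ω ≤ N + 1 := by
    by_contra h
    push Not at h
    have := h1 _ h
    unfold cl at this
    rw [if_neg (by omega), if_pos (by omega)] at this
    simp at this
  refine ⟨a1, a2, fun h => ?_, fun x hx hx' => ?_⟩
  · unfold cl at h0
    rwa [if_neg (by omega), if_neg (by omega)] at h0
  · have := h1 x hx'
    unfold cl at this
    rwa [if_neg (by omega), if_neg (by omega)] at this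

lemma XN_eq {N : ℕ} {ω : Config} {m : ℤ} (h1 : -(N:ℤ) ≤ m) (h2 : m ≤ N + 1)
    (h3 : m ≤ N → ω m = false) (h4 : ∀ x, -(N:ℤ) ≤ x → x < m → ω x = true) : XN N ω = m := by
  refine front_eq_iff ?_ fun x hx => ?_
  · unfold cl
    rw [if_neg (by omega)]
    split_ifs with h
    · rfl
    · exact h3 (by omega)
  · unfold cl
    split_ifs with h h'
    · rfl
    · omega
    · exact h4 x (by omega) hx

lemma XN_LO {N : ℕ} {ω : Config} (h : ω ∈ LO) (h1 : -(N:ℤ) ≤ front ω) (h2 : front ω ≤ N) :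
    XN N ω = front ω := by
  obtain ⟨a, b⟩ := front_spec h
  exact XN_eq h1 (by omega) (fun _ => a) (fun x _ hx => b x hx)

lemma XN_abs_le {N : ℕ} {ω : Config} (h : ω ∈ LO) : |XN N ω| ≤ |front ω| := by
  obtain ⟨a, b⟩ := front_spec h
  obtain ⟨c1, c2, c3, c4⟩ := XN_spec N ω
  by_cases h1 : -(N:ℤ) ≤ front ω
  · by_cases h2 : front ω ≤ N
    · rw [XN_LO h h1 h2]
    · rw [abs_of_nonneg (by omega : 0 ≤ front ω), abs_le]; constructor <;> omega
  · rw [abs_of_nonpos (by omega : front ω ≤ 0), abs_le]; constructor <;> omega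

lemma XN_cylinder (N : ℕ) (F : ℤ → ℝ) : IsCylinder (fun ω => F (XN N ω)) := by
  refine ⟨Finset.Icc (-(N:ℤ)) N, fun ω ω' h => ?_⟩
  have : cl N ω = cl N ω' := by
    funext x
    unfold cl
    split_ifs with h1 h2
    · rfl
    · rfl
    · exact h x (by simp; omega)
  simp [XN, this]

lemma continuous_XN (N : ℕ) : Continuous (XN N) := by
  have h : Continuous fun ω => ((XN N ω : ℤ) : ℝ) :=
    continuous_of_cylinder (XN_cylinder N (fun x => (x:ℝ)))
  exact Int.isClosedEmbedding_coe_real.isInducing.continuous_iff.2 h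

lemma continuous_thetaN (N : ℕ) : Continuous fun ω => R (shift (XN N ω) ω) :=
  continuous_R.comp (continuous_shift_prod.comp ((continuous_XN N).prodMk continuous_id))

lemma flip_other {ω : Config} {x y : ℤ} (h : y ≠ x) : flipAt ω x y = ω y := by simp [flipAt, h]

lemma flip_same {ω : Config} {x : ℤ} : flipAt ω x x = !ω x := by simp [flipAt]

lemma eastGen_XN (p : ℝ) (N : ℕ) (F : ℤ → ℝ) (ω : Config) :
    eastGen p (fun ω => F (XN N ω)) ω =
      (if XN N ω ≤ N then (if ω (XN N ω + 1) = false then 1 else 0) * p *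
        (F (XN N ω + 1) - F (XN N ω)) else 0) +
      (if -(N:ℤ) < XN N ω then (if ω (XN N ω) = false then 1 else 0) * (1 - p) *
        (F (XN N ω - 1) - F (XN N ω)) else 0) := by
  obtain ⟨c1, c2, c3, c4⟩ := XN_spec N ω
  set m := XN N ω with hm
  unfold eastGen
  beta_reduce
  rw [tsum_eq_sum (s := {m, m - 1})]
  · rw [Finset.sum_pair (by omega)]
    congr 1
    · by_cases h1 : m ≤ N
      · rw [if_pos h1, c3 h1, if_pos rfl]
        by_cases h2 : ω (m + 1) = false
        · have : XN N (flipAt ω m) = m + 1 := by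
            refine XN_eq (by omega) (by omega) ?_ ?_
            · intro _; rw [flip_other (by omega), h2]
            · intro x hx hx'
              by_cases hxm : x = m
              · rw [hxm, flip_same, c3 h1]; rfl
              · rw [flip_other hxm]; exact c4 x hx (by omega)
          rw [this, ← hm]
        · simp [h2]
      · rw [if_neg h1]
        have : XN N (flipAt ω m) = m := by
          refine XN_eq c1 c2 (fun h => absurd h h1) fun x hx hx' => ?_
          rw [flip_other (by omega)]; exact c4 x hx hx'
        rw [this, ← hm]; simp
    · rw [sub_add_cancel]
      by_cases h1 : -(N:ℤ) < m
      · rw [if_pos h1, c4 (m-1) (by omega) (by omega)]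
        by_cases h2 : ω m = false
        · have : XN N (flipAt ω (m-1)) = m - 1 := by
            refine XN_eq (by omega) (by omega) (fun _ => ?_) fun x hx hx' => ?_
            · rw [flip_same, c4 (m-1) (by omega) (by omega)]; rfl
            · rw [flip_other (by omega)]; exact c4 x hx (by omega)
          rw [this, ← hm]; simp
        · simp [h2]
      · rw [if_neg h1]
        have : XN N (flipAt ω (m-1)) = m := by
          refine XN_eq c1 c2 (fun h => ?_) fun x hx hx' => ?_
          · rw [flip_other (by omega)]; exact c3 h
          · omega
        rw [this, ← hm]; simp
  · intro x hx
    simp only [Finset.mem_insert, Finset.mem_singleton, not_or] at hx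
    by_cases hr : ω (x + 1) = false
    · have : XN N (flipAt ω x) = m := by
        have hx2 : x < -(N:ℤ) ∨ m < x := by
          by_contra hcon
          push Not at hcon
          have := c4 (x+1) (by omega) (by omega)
          simp_all
        refine XN_eq c1 c2 (fun h => ?_) fun y hy hy' => ?_
        · rw [flip_other (by omega)]; exact c3 h
        · rw [flip_other (by omega)]; exact c4 y hy hy'
      rw [this, ← hm]; simp
    · simp [hr]

lemma eastGen_XN_bound {p : ℝ} (hp0 : 0 < p) (hp1 : p < 1) (N : ℕ) (F : ℤ → ℝ) (ω : Config) :
    |eastGen p (fun ω => F (XN N ω)) ω| ≤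
      |F (XN N ω + 1) - F (XN N ω)| + |F (XN N ω - 1) - F (XN N ω)| := by
  rw [eastGen_XN]
  refine (abs_add_le _ _).trans (add_le_add ?_ ?_)
  · split_ifs
    · rw [one_mul, abs_mul, abs_of_pos hp0]
      exact mul_le_of_le_one_left (abs_nonneg _) hp1.le
    · simp
    · simp
  · split_ifs
    · rw [one_mul, abs_mul, abs_of_pos (by linarith : 0 < 1 - p)]
      exact mul_le_of_le_one_left (abs_nonneg _) (by linarith)
    · simp
    · simp

/-- drift of the front as a function of the configuration seen from the front -/
def g1 (ω : Config) : ℝ := if ω 1 = false then 1 else 0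

lemma eastGen_XN_exact (p : ℝ) {N : ℕ} {ω : Config} (h : ω ∈ LO) (h1 : -(N:ℤ) < front ω)
    (h2 : front ω ≤ N) :
    eastGen p (fun ω => ((XN N ω : ℤ) : ℝ)) ω = p * g1 (θL 0 ω) - (1 - p) := by
  have e := XN_LO h h1.le h2
  have := eastGen_XN p N (fun x => (x:ℝ)) ω
  rw [this, e, if_pos h2, if_pos h1, (front_spec h).1]
  have : θL 0 ω 1 = ω (front ω + 1) := by simp [θL]
  unfold g1
  rw [this]
  push_cast
  simp
  split_ifs <;> ring

end EastLLN


namespace EastLLN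

variable (E : EastProcess)

lemma ae_LO {t : ℝ} (ht : 0 ≤ t) {ω : Config} (h : ω ∈ LO) : ∀ᵐ η ∂(E.P t ω), η ∈ LO :=
  mem_ae_iff_prob_eq_one measurableSet_LO |>.2 (E.loStable t ht ω h)

/-- exponential rate -/
def CC : ℝ := 2 * Real.exp 2

lemma CC_pos : 0 < CC := by unfold CC; positivity

lemma XN_tendsto {η : Config} (h : η ∈ LO) : ∀ᶠ N : ℕ in atTop, XN N η = front η := by
  filter_upwards [eventually_ge_atTop (front η).natAbs] with N hN
  exact XN_LO h (by omega) (by omega)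

lemma XN_LO0 {ω : Config} (h : ω ∈ LO₀) (N : ℕ) : XN N ω = 0 := by
  rw [XN_LO h.1] <;> rw [h.2] <;> omega

lemma expmom_N {ω : Config} (h : ω ∈ LO₀) {t : ℝ} (ht : 0 ≤ t) (N : ℕ) :
    Pf E t (fun η => Real.exp (2 * |((XN N η : ℤ) : ℝ)|)) ω ≤ Real.exp (CC * t) := by
  have := gronwall E (XN_cylinder N (fun x => Real.exp (2 * |(x:ℝ)|))) CC_pos ht ?_ ω
  · rw [XN_LO0 h N] at this
    simpa using this
  · intro η
    refine (le_abs_self _).trans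
      ((eastGen_XN_bound E.hp0 E.hp1 N (fun x => Real.exp (2 * |(x:ℝ)|)) η).trans ?_)
    set m := XN N η
    have key : ∀ x : ℝ, |x - m| ≤ 1 → |Real.exp (2 * |x|) - Real.exp (2 * |(m:ℝ)|)| ≤
        Real.exp 2 * Real.exp (2 * |(m:ℝ)|) := by
      intro x hx
      have h1 : |x| ≤ |(m:ℝ)| + 1 := by
        have := abs_sub_abs_le_abs_sub x m
        linarith
      have h2 : Real.exp (2 * |x|) ≤ Real.exp 2 * Real.exp (2 * |(m:ℝ)|) := by
        rw [← Real.exp_add]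
        exact Real.exp_le_exp.2 (by linarith)
      have h3 : Real.exp (2 * |(m:ℝ)|) ≤ Real.exp 2 * Real.exp (2 * |(m:ℝ)|) :=
        le_mul_of_one_le_left (Real.exp_pos _).le (Real.one_le_exp (by norm_num))
      have := Real.exp_pos (2 * |x|)
      have := Real.exp_pos (2 * |(m:ℝ)|)
      rw [abs_le]; constructor <;> linarith
    have k1 := key (m + 1) (by simp)
    have k2 := key (m - 1) (by simp)
    simp only [CC]
    push_cast
    linarith

lemma measurable_frontR : Measurable fun η : Config => ((front η : ℤ) : ℝ) :=
  (measurable_of_countable (fun x : ℤ => (x:ℝ))).comp measurable_front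

lemma expmom_lintegral {ω : Config} (h : ω ∈ LO₀) {t : ℝ} (ht : 0 ≤ t) :
    ∫⁻ η, ENNReal.ofReal (Real.exp (2 * |((front η : ℤ) : ℝ)|)) ∂(E.P t ω) ≤
      ENNReal.ofReal (Real.exp (CC * t)) := by
  have hcyl := fun N : ℕ => continuous_of_cylinder (XN_cylinder N (fun x => Real.exp (2 * |(x:ℝ)|)))
  calc ∫⁻ η, ENNReal.ofReal (Real.exp (2 * |((front η : ℤ) : ℝ)|)) ∂(E.P t ω)
      ≤ ∫⁻ η, liminf (fun N : ℕ => ENNReal.ofReal (Real.exp (2 * |((XN N η : ℤ) : ℝ)|))) atTop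
          ∂(E.P t ω) := by
        refine lintegral_mono_ae ?_
        filter_upwards [ae_LO E ht h.1] with η hη
        refine le_of_eq ?_
        refine (Tendsto.liminf_eq ?_).symm
        refine tendsto_const_nhds.congr' ?_
        filter_upwards [XN_tendsto hη] with N hN
        rw [hN]
    _ ≤ liminf (fun N : ℕ => ∫⁻ η, ENNReal.ofReal (Real.exp (2 * |((XN N η : ℤ) : ℝ)|)) ∂(E.P t ω))
          atTop :=
        lintegral_liminf_le fun N => (hcyl N).measurable.ennreal_ofReal
    _ ≤ _ := by
        refine liminf_le_of_frequently_le' (Eventually.frequently (Eventually.of_forall fun N => ?_))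
        rw [← ofReal_integral_eq_lintegral_ofReal (integrable_cont (hcyl N) _)
          (Eventually.of_forall fun η => (Real.exp_pos _).le)]
        exact ENNReal.ofReal_le_ofReal (expmom_N E h ht N)

lemma expmom_integrable {ω : Config} (h : ω ∈ LO₀) {t : ℝ} (ht : 0 ≤ t) :
    Integrable (fun η => Real.exp (2 * |((front η : ℤ) : ℝ)|)) (E.P t ω) := by
  have hm : Measurable fun η : Config => Real.exp (2 * |((front η : ℤ) : ℝ)|) :=
    Real.measurable_exp.comp ((continuous_abs.measurable.comp measurable_frontR).const_mul 2)
  refine ⟨hm.aestronglyMeasurable, ?_⟩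
  rw [hasFiniteIntegral_iff_ofReal (Eventually.of_forall fun η => (Real.exp_pos _).le)]
  exact (expmom_lintegral E h ht).trans_lt ENNReal.ofReal_lt_top

lemma expmom_integral {ω : Config} (h : ω ∈ LO₀) {t : ℝ} (ht : 0 ≤ t) :
    ∫ η, Real.exp (2 * |((front η : ℤ) : ℝ)|) ∂(E.P t ω) ≤ Real.exp (CC * t) := by
  rw [← ENNReal.ofReal_le_ofReal_iff (Real.exp_pos _).le,
    ofReal_integral_eq_lintegral_ofReal (expmom_integrable E h ht)
      (Eventually.of_forall fun η => (Real.exp_pos _).le)]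
  exact expmom_lintegral E h ht

lemma R_LO0 (ω : Config) : R ω ∈ LO₀ := ⟨(R_mem ω).1, (R_mem ω).2⟩

/-- semigroup seen from the front -/
def S (t : ℝ) (f : Config → ℝ) (ω : Config) : ℝ := ∫ η, f (θL 0 η) ∂(E.P (max t 0) (R ω))

/-- truncated version -/
def SN (N : ℕ) (t : ℝ) (f : Config → ℝ) (ω : Config) : ℝ :=
  ∫ η, f (R (shift (XN N η) η)) ∂(E.P (max t 0) (R ω))

lemma integrable_theta {f : Config → ℝ} (hf : Continuous f) (m : Measure Config)
    [IsFiniteMeasure m] : Integrable (fun η => f (θL 0 η)) m := by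
  obtain ⟨C, _, hC⟩ := exists_bound hf
  exact Integrable.of_bound (hf.measurable.comp measurable_theta).aestronglyMeasurable C
    (Eventually.of_forall fun η => hC _)

lemma S_bound {f : Config → ℝ} {B : ℝ} (hB : ∀ ω, |f ω| ≤ B) (t : ℝ) (ω : Config) :
    |S E t f ω| ≤ B := abs_integral_le (fun _ => hB _) _

lemma S_SN {f : Config → ℝ} (hf : Continuous f) {B : ℝ} (hB : ∀ ω, |f ω| ≤ B) (N : ℕ) (t : ℝ)
    (ω : Config) :
    |S E t f ω - SN E N t f ω| ≤ 2 * B * Real.exp (-2 * N) * Real.exp (CC * max t 0) := by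
  have ht : 0 ≤ max t 0 := le_max_right _ _
  have hB0 : 0 ≤ B := (abs_nonneg _).trans (hB ω)
  unfold S SN
  rw [← integral_sub (integrable_theta hf _) (integrable_cont (f := fun η => f (R (shift (XN N η) η)))
    (hf.comp (continuous_thetaN N)) _)]
  have h1 : ∀ᵐ η ∂(E.P (max t 0) (R ω)), ‖f (θL 0 η) - f (R (shift (XN N η) η))‖ ≤
      2 * B * Real.exp (-2 * N) * Real.exp (2 * |((front η : ℤ) : ℝ)|) := by
    filter_upwards [ae_LO E ht (R_mem ω).1] with η hη
    by_cases hb : |front η| ≤ N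
    · rw [abs_le] at hb
      rw [XN_LO hη hb.1 hb.2, theta_eq]
      simp only [sub_self, norm_zero]
      positivity
    · push Not at hb
      have hb' : (N:ℝ) ≤ |((front η : ℤ) : ℝ)| := by exact_mod_cast hb.le
      have h2 : 1 ≤ Real.exp (-2 * N) * Real.exp (2 * |((front η : ℤ) : ℝ)|) := by
        rw [← Real.exp_add]
        exact Real.one_le_exp (by linarith)
      rw [mul_assoc]
      have h3 : ‖f (θL 0 η) - f (R (shift (XN N η) η))‖ ≤ 2 * B := by
        refine (norm_sub_le _ _).trans ?_
        have a := hB (θL 0 η)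
        have b := hB (R (shift (XN N η) η))
        rw [Real.norm_eq_abs, Real.norm_eq_abs]
        linarith
      exact h3.trans (le_mul_of_one_le_right (by linarith) h2)
  have h2 := norm_integral_le_of_norm_le ((expmom_integrable E (R_LO0 ω) ht).const_mul _) h1
  rw [integral_const_mul] at h2
  refine h2.trans ?_
  gcongr
  exact expmom_integral E (R_LO0 ω) ht

lemma S_bound_tendsto (B c : ℝ) :
    Tendsto (fun N : ℕ => 2 * B * Real.exp (-2 * N) * c) atTop (𝓝 0) := by
  have h1 : Tendsto (fun N : ℕ => Real.exp (-2 * (N:ℝ))) atTop (𝓝 0) := by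
    refine Real.tendsto_exp_atBot.comp ?_
    exact tendsto_natCast_atTop_atTop.const_mul_atTop_of_neg (by norm_num)
  simpa using (h1.const_mul (2 * B)).mul_const c

lemma SN_tendsto {f : Config → ℝ} (hf : Continuous f) (t : ℝ) (ω : Config) :
    Tendsto (fun N => SN E N t f ω) atTop (𝓝 (S E t f ω)) := by
  obtain ⟨B, hB0, hB⟩ := exists_bound hf
  rw [tendsto_iff_norm_sub_tendsto_zero]
  refine squeeze_zero (fun _ => norm_nonneg _) (fun N => ?_) (S_bound_tendsto B (Real.exp (CC * max t 0)))
  rw [norm_sub_rev]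
  exact S_SN E hf hB N t ω

lemma S_continuous {f : Config → ℝ} (hf : Continuous f) (t : ℝ) : Continuous (S E t f) := by
  obtain ⟨B, hB0, hB⟩ := exists_bound hf
  have : TendstoUniformly (fun N => SN E N t f) (S E t f) atTop := by
    rw [Metric.tendstoUniformly_iff]
    intro ε hε
    filter_upwards [(S_bound_tendsto B (Real.exp (CC * max t 0))).eventually_lt_const hε] with N hN ω
    exact (S_SN E hf hB N t ω).trans_lt hN
  refine this.continuous (Eventually.frequently (Eventually.of_forall fun N => ?_))
  exact (E.feller _ (le_max_right _ _) _ (hf.comp (continuous_thetaN N))).comp continuous_R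

lemma S_measurable {f : Config → ℝ} (hf : Continuous f) (ω : Config) :
    Measurable fun t => S E t f ω := by
  refine measurable_of_tendsto_metrizable (f := fun N t => SN E N t f ω) (fun N => ?_)
    (tendsto_pi_nhds.2 fun t => SN_tendsto E hf t ω)
  exact ((E.timeCont _ (hf.comp (continuous_thetaN N)) (R ω)).comp
    (continuous_id.max continuous_const)).measurable

lemma S_intervalIntegrable {f : Config → ℝ} (hf : Continuous f) (ω : Config) (a b : ℝ) :
    IntervalIntegrable (fun t => S E t f ω) volume a b := by
  obtain ⟨B, hB0, hB⟩ := exists_bound hf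
  refine (intervalIntegrable_const (c := B)).mono_fun' (S_measurable E hf ω).aestronglyMeasurable ?_
  exact Eventually.of_forall fun t => S_bound E hB t ω

/-- law from a point of `LO` compared with law from its recentring -/
lemma P_theta {t : ℝ} (ht : 0 ≤ t) {η : Config} (hη : η ∈ LO) :
    E.P t (θL 0 η) = Measure.map (shift (front η)) (E.P t η) := by
  rw [theta_LO hη, E.shiftComm t ht]

lemma S_of_LO {t : ℝ} (ht : 0 ≤ t) {f : Config → ℝ} (hf : Continuous f) {η : Config} (hη : η ∈ LO) :
    S E t f (θL 0 η) = ∫ ζ, f (θL 0 ζ) ∂(E.P t η) := by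
  unfold S
  rw [max_eq_left ht, R_theta, P_theta E ht hη, integral_map
    (f := fun η => f (θL 0 η)) (continuous_shift _).measurable.aemeasurable
    (hf.measurable.comp measurable_theta).aestronglyMeasurable]
  refine integral_congr_ae ?_
  filter_upwards [ae_LO E ht hη] with ζ hζ
  rw [theta_shift hζ]

lemma S_semigroup {s t : ℝ} (hs : 0 ≤ s) (ht : 0 ≤ t) {f : Config → ℝ} (hf : Continuous f)
    (ω : Config) : S E s (S E t f) ω = S E (s + t) f ω := by
  have e1 : S E (s + t) f ω = ∫ η, ∫ ζ, f (θL 0 ζ) ∂(E.P t η) ∂(E.P s (R ω)) := by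
    unfold S
    rw [max_eq_left (add_nonneg hs ht), E.semigroup t s ht hs]
    have := E.markov s
    have := E.markov t
    rw [Kernel.integral_comp (integrable_theta hf _)]
  rw [e1]
  unfold S
  rw [max_eq_left hs]
  refine integral_congr_ae ?_
  filter_upwards [ae_LO E hs (R_mem ω).1] with η hη
  exact S_of_LO E ht hf hη

lemma front_integrable {ω : Config} (h : ω ∈ LO₀) {t : ℝ} (ht : 0 ≤ t) :
    Integrable (fun η => |((front η : ℤ) : ℝ)|) (E.P t ω) := by
  refine (expmom_integrable E h ht).mono' (continuous_abs.measurable.comp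
    measurable_frontR).aestronglyMeasurable ?_
  refine Eventually.of_forall fun η => ?_
  have := Real.add_one_le_exp (2 * |((front η : ℤ) : ℝ)|)
  have := abs_nonneg ((front η : ℤ) : ℝ)
  rw [Real.norm_eq_abs, abs_abs]
  linarith

lemma continuous_g1 : Continuous g1 := continuous_bool 1 (fun b => if b = false then 1 else 0)

lemma front_mean {ω : Config} (h : ω ∈ LO₀) {t : ℝ} (ht : 0 ≤ t) :
    ∫ η, ((front η : ℤ) : ℝ) ∂(E.P t ω) =
      ∫ s in (0:ℝ)..t, (E.p * S E s g1 ω - (1 - E.p)) := by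
  have hcyl := fun N : ℕ => XN_cylinder N (fun x => (x:ℝ))
  have l1 : Tendsto (fun N : ℕ => Pf E t (fun η => ((XN N η : ℤ) : ℝ)) ω) atTop
      (𝓝 (∫ η, ((front η : ℤ) : ℝ) ∂(E.P t ω))) := by
    refine tendsto_integral_of_dominated_convergence (fun η => |((front η : ℤ) : ℝ)|) ?_
      (front_integrable E h ht) ?_ ?_
    · exact fun N => (continuous_of_cylinder (hcyl N)).measurable.aestronglyMeasurable
    · intro N
      filter_upwards [ae_LO E ht h.1] with η hη
      rw [Real.norm_eq_abs]
      exact_mod_cast XN_abs_le hη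
    · filter_upwards [ae_LO E ht h.1] with η hη
      refine tendsto_const_nhds.congr' ?_
      filter_upwards [XN_tendsto hη] with N hN
      rw [hN]
  have hb : ∀ (N : ℕ) (η : Config), |eastGen E.p (fun η => ((XN N η : ℤ) : ℝ)) η| ≤ 2 := by
    intro N η
    have := eastGen_XN_bound E.hp0 E.hp1 N (fun x => (x:ℝ)) η
    push_cast at this
    simp only [add_sub_cancel_left, abs_one, sub_sub_cancel_left, abs_neg] at this
    linarith
  have l2 : Tendsto (fun N : ℕ => ∫ s in (0:ℝ)..t,
      Pf E s (eastGen E.p (fun η => ((XN N η : ℤ) : ℝ))) ω) atTop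
      (𝓝 (∫ s in (0:ℝ)..t, (E.p * S E s g1 ω - (1 - E.p)))) := by
    refine intervalIntegral.tendsto_integral_filter_of_dominated_convergence (fun _ => 2) ?_ ?_ ?_ ?_
    · exact Eventually.of_forall fun N =>
        (Pf_cont_t E (continuous_eastGen E.p (hcyl N)) ω).aestronglyMeasurable
    · exact Eventually.of_forall fun N => Eventually.of_forall fun s _ =>
        abs_integral_le (hb N) _
    · exact intervalIntegrable_const
    · refine Eventually.of_forall fun s hs => ?_
      rw [Set.uIoc_of_le ht] at hs
      have hs0 : 0 ≤ s := hs.1.le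
      have e : E.p * S E s g1 ω - (1 - E.p) =
          ∫ η, (E.p * g1 (θL 0 η) - (1 - E.p)) ∂(E.P s ω) := by
        rw [integral_sub ((integrable_theta continuous_g1 _).const_mul _) (integrable_const _),
          integral_const_mul]
        simp [S, max_eq_left hs0, R_of_LO0 h]
      rw [e]
      refine tendsto_integral_of_dominated_convergence (fun η => 2) ?_ (integrable_const _) ?_ ?_
      · exact fun N => (continuous_eastGen E.p (hcyl N)).measurable.aestronglyMeasurable
      · exact fun N => Eventually.of_forall (hb N)
      · filter_upwards [ae_LO E hs0 h.1] with η hη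
        refine tendsto_const_nhds.congr' ?_
        filter_upwards [eventually_ge_atTop ((front η).natAbs + 1)] with N hN
        exact (eastGen_XN_exact E.p hη (by omega) (by omega)).symm
  refine tendsto_nhds_unique l1 (l2.congr fun N => ?_)
  rw [dynkin E (hcyl N) ht ω, XN_LO0 h N]
  simp

end EastLLN


namespace EastLLN

variable (E : EastProcess)

/-- time averages of the process seen from the front -/
def A (T : ℝ) (f : Config → ℝ) (ω : Config) : ℝ := T⁻¹ * ∫ s in (0:ℝ)..T, S E s f ω

lemma int_S_bound {f : Config → ℝ} {B : ℝ} (hB : ∀ ω, |f ω| ≤ B) (a b : ℝ) (ω : Config) :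
    |∫ s in a..b, S E s f ω| ≤ B * |b - a| := by
  rw [← Real.norm_eq_abs]
  exact intervalIntegral.norm_integral_le_of_norm_le_const fun s _ => S_bound E hB s ω

lemma A_bound {f : Config → ℝ} {B : ℝ} (hB : ∀ ω, |f ω| ≤ B) (T : ℝ) (ω : Config) :
    |A E T f ω| ≤ B := by
  have hB0 : 0 ≤ B := (abs_nonneg _).trans (hB ω)
  have h1 : |∫ s in (0:ℝ)..T, S E s f ω| ≤ B * |T - 0| :=
    int_S_bound E hB _ _ ω
  rw [sub_zero] at h1
  unfold A
  rw [abs_mul, abs_inv]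
  by_cases hT : T = 0
  · simp [hT, hB0]
  · have : 0 < |T| := abs_pos.2 hT
    rw [inv_mul_le_iff₀ this]
    linarith

lemma S_add {f g : Config → ℝ} (hf : Continuous f) (hg : Continuous g) (t : ℝ) (ω : Config) :
    S E t (fun x => f x + g x) ω = S E t f ω + S E t g ω :=
  integral_add (integrable_theta hf _) (integrable_theta hg _)

lemma A_add {f g : Config → ℝ} (hf : Continuous f) (hg : Continuous g) (T : ℝ) (ω : Config) :
    A E T (fun x => f x + g x) ω = A E T f ω + A E T g ω := by
  unfold A
  simp only [S_add E hf hg]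
  rw [intervalIntegral.integral_add (S_intervalIntegrable E hf ω _ _)
    (S_intervalIntegrable E hg ω _ _), mul_add]

lemma A_smul (c : ℝ) (f : Config → ℝ) (T : ℝ) (ω : Config) :
    A E T (fun x => c * f x) ω = c * A E T f ω := by
  unfold A S
  simp only [integral_const_mul, intervalIntegral.integral_const_mul]
  ring

lemma A_nonneg {f : Config → ℝ} (hf : ∀ x, 0 ≤ f x) {T : ℝ} (hT : 0 ≤ T) (ω : Config) :
    0 ≤ A E T f ω := by
  unfold A
  refine mul_nonneg (inv_nonneg.2 hT) (intervalIntegral.integral_nonneg hT fun s _ => ?_)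
  exact integral_nonneg fun _ => hf _

lemma A_const (c : ℝ) {T : ℝ} (hT : 0 < T) (ω : Config) : A E T (fun _ => c) ω = c := by
  unfold A S
  simp
  field_simp

lemma A_congr {f g : Config → ℝ} (h : ∀ ω, f (θL 0 ω) = g (θL 0 ω)) (T : ℝ) (ω : Config) :
    A E T f ω = A E T g ω := by
  unfold A S
  simp only [h]

lemma A_shift {f : Config → ℝ} (hf : Continuous f) {B : ℝ} (hB : ∀ ω, |f ω| ≤ B) {t T : ℝ}
    (ht : 0 ≤ t) (hT : 0 < T) (ω : Config) :
    |A E T (S E t f) ω - A E T f ω| ≤ 2 * B * t * T⁻¹ := by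
  have e1 : ∫ s in (0:ℝ)..T, S E s (S E t f) ω = ∫ s in (0 + t)..(T + t), S E s f ω := by
    rw [← intervalIntegral.integral_comp_add_right (fun s => S E s f ω) t]
    refine intervalIntegral.integral_congr fun s hs => ?_
    rw [Set.uIcc_of_le hT.le] at hs
    exact S_semigroup E hs.1 ht hf ω
  have I := S_intervalIntegrable E hf ω
  have e2 := intervalIntegral.integral_add_adjacent_intervals (I 0 t) (I t (T + t))
  have e3 := intervalIntegral.integral_add_adjacent_intervals (I 0 T) (I T (T + t))
  have b1 : |∫ s in (0:ℝ)..t, S E s f ω| ≤ B * |t - 0| :=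
    int_S_bound E hB _ _ ω
  have b2 : |∫ s in T..(T + t), S E s f ω| ≤ B * |T + t - T| :=
    int_S_bound E hB _ _ ω
  rw [sub_zero, abs_of_nonneg ht] at b1
  rw [add_sub_cancel_left, abs_of_nonneg ht] at b2
  unfold A
  rw [e1, zero_add, ← mul_sub, abs_mul, abs_of_pos (inv_pos.2 hT), mul_comm]
  refine mul_le_mul_of_nonneg_right ?_ (inv_pos.2 hT).le
  have : (∫ s in t..(T + t), S E s f ω) - ∫ s in (0:ℝ)..T, S E s f ω =
      (∫ s in T..(T + t), S E s f ω) - ∫ s in (0:ℝ)..t, S E s f ω := by linarith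
  rw [this]
  refine (abs_sub _ _).trans ?_
  linarith

/-- view a continuous function as a compactly supported one -/
def toCc (f : Config → ℝ) (hf : Continuous f) : CompactlySupportedContinuousMap Config ℝ where
  toFun := f
  continuous_toFun := hf
  hasCompactSupport' := HasCompactSupport.of_compactSpace _

lemma LO0_eq : LO₀ = {ω : Config | ω 0 = false ∧ ∀ x < 0, ω x = true} := by
  ext ω
  constructor
  · rintro ⟨h, h'⟩
    have := front_spec h
    rw [h'] at this
    exact this
  · rintro ⟨h0, h1⟩
    exact ⟨mem_LO h0 h1, front_eq_iff h0 h1⟩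

lemma measurableSet_LO0 : MeasurableSet LO₀ := by
  rw [LO0_eq]; exact measurableSet_at 0

theorem exists_inv (U : Ultrafilter (ℝ × Config)) (hU : (U : Filter (ℝ × Config)) ≤ atTop ×ˢ ⊤) :
    ∃ ν' : Measure Config, IsProbabilityMeasure ν' ∧ ν' LO₀ = 1 ∧
      (∀ t : ℝ, 0 ≤ t → Qt E t ν' = ν') ∧
      ∀ f : Config → ℝ, Continuous f → Tendsto (fun z : ℝ × Config => A E z.1 f z.2) U
        (𝓝 (∫ x, f x ∂ν')) := by
  have hT : Tendsto (fun z : ℝ × Config => z.1) U atTop := tendsto_fst.mono_left hU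
  have hpos : ∀ᶠ z : ℝ × Config in U, 0 < z.1 := hT.eventually_gt_atTop 0
  have hex : ∀ f : CompactlySupportedContinuousMap Config ℝ, ∃ L : ℝ,
      Tendsto (fun z : ℝ × Config => A E z.1 f z.2) U (𝓝 L) := by
    intro f
    obtain ⟨B, hB0, hB⟩ := exists_bound f.continuous
    have hc : IsCompact (Set.Icc (-B) B) := isCompact_Icc
    rw [isCompact_iff_ultrafilter_le_nhds'] at hc
    obtain ⟨L, -, hL⟩ := hc (U.map (fun z : ℝ × Config => A E z.1 f z.2)) (by
      rw [Ultrafilter.mem_map]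
      refine Filter.mem_of_superset Filter.univ_mem fun z _ => ?_
      exact abs_le.1 (A_bound E hB z.1 z.2))
    exact ⟨L, hL⟩
  choose L hL using hex
  let Λ : CompactlySupportedContinuousMap Config ℝ →ₚ[ℝ] ℝ := PositiveLinearMap.mk₀
    { toFun := L
      map_add' := fun f g => by
        refine tendsto_nhds_unique (hL (f + g)) (((hL f).add (hL g)).congr fun z => ?_)
        exact (A_add E f.continuous g.continuous z.1 z.2).symm
      map_smul' := fun c f => by
        refine tendsto_nhds_unique (hL (c • f)) (((hL f).const_mul c).congr fun z => ?_)
        exact (A_smul E c f z.1 z.2).symm }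
    (fun f hf => by
      refine ge_of_tendsto (hL f) ?_
      filter_upwards [hpos] with z hz
      exact A_nonneg E (fun x => hf x) hz.le _)
  set ν' := RealRMK.rieszMeasure Λ with hν'
  have hlim : ∀ f : Config → ℝ, Continuous f → Tendsto (fun z : ℝ × Config => A E z.1 f z.2) U
        (𝓝 (∫ x, f x ∂ν')) := by
    intro f hf
    have h1 : ∫ x, f x ∂ν' = L (toCc f hf) := RealRMK.integral_rieszMeasure Λ (toCc f hf)
    rw [h1]
    exact hL (toCc f hf)
  have hprob : IsProbabilityMeasure ν' := by
    have h1 := hlim (fun _ => 1) continuous_const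
    have h2 : Tendsto (fun z : ℝ × Config => A E z.1 (fun _ => 1) z.2) U (𝓝 1) := by
      refine tendsto_const_nhds.congr' ?_
      filter_upwards [hpos] with z hz
      exact (A_const E 1 hz z.2).symm
    have h3 := tendsto_nhds_unique h1 h2
    rw [integral_const, smul_eq_mul, mul_one] at h3
    constructor
    rw [← ENNReal.ofReal_toReal (measure_ne_top ν' Set.univ)]
    change ENNReal.ofReal (ν'.real Set.univ) = 1
    rw [h3, ENNReal.ofReal_one]
  -- support
  have hsupp : ∀ x : ℤ, ∀ b : Bool, (∀ ω, θL 0 ω x = !b) → ν' {ω | ω x = b} = 0 := by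
    intro x b hx
    have hms : MeasurableSet {ω : Config | ω x = b} :=
      measurableSet_eq_fun (measurable_pi_apply x) measurable_const
    have h1 := hlim (fun ω => if ω x = b then 1 else 0)
      (continuous_bool x (fun c => if c = b then 1 else 0))
    have h2 : Tendsto (fun z : ℝ × Config => A E z.1 (fun ω => if ω x = b then 1 else 0) z.2) U
        (𝓝 0) := by
      refine tendsto_const_nhds.congr' ?_
      filter_upwards [hpos] with z hz
      rw [A_congr E (g := fun _ => 0) (fun ω => by simp [hx]), A_const E 0 hz]
    have h3 := tendsto_nhds_unique h1 h2
    have h4 : ∫ ω : Config, (if ω x = b then (1:ℝ) else 0) ∂ν' = ν'.real {ω | ω x = b} := by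
      have : (fun ω : Config => if ω x = b then (1:ℝ) else 0) =
          Set.indicator {ω : Config | ω x = b} 1 := by
        funext ω; simp [Set.indicator_apply]
      rw [this, integral_indicator_one hms]
    rw [h4] at h3
    exact (measureReal_eq_zero_iff).1 h3
  have hLO : ∀ᵐ ω ∂ν', ω ∈ LO₀ := by
    have a0 : ∀ᵐ ω ∂ν', ω 0 = false := by
      have := hsupp 0 true (fun ω => by simp [θL])
      rw [ae_iff]
      convert this using 2
      ext ω; simp
    have a1 : ∀ᵐ ω ∂ν', ∀ x : ℤ, x < 0 → ω x = true := by
      rw [ae_all_iff]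
      intro x
      by_cases hx : x < 0
      · have := hsupp x false (fun ω => by simp [θL, hx])
        rw [ae_iff]
        convert this using 2
        ext ω; simp [hx]
      · exact Eventually.of_forall fun ω h => absurd h hx
    filter_upwards [a0, a1] with ω h0 h1
    rw [LO0_eq]
    exact ⟨h0, h1⟩
  refine ⟨ν', hprob, (mem_ae_iff_prob_eq_one measurableSet_LO0).1 hLO, fun t ht => ?_, hlim⟩
  have hp1 : IsProbabilityMeasure (ν'.bind (E.P t)) :=
    inferInstanceAs (IsProbabilityMeasure ((E.P t) ∘ₘ ν'))
  have hp2 : IsProbabilityMeasure (Qt E t ν') :=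
    Measure.isProbabilityMeasure_map (μ := ν'.bind (E.P t)) measurable_theta.aemeasurable
  refine ext_of_forall_integral_eq_of_IsFiniteMeasure fun f => ?_
  have hf := f.continuous
  obtain ⟨B, hB0, hB⟩ := exists_bound hf
  have e1 : ∫ x, f x ∂(Qt E t ν') = ∫ η, S E t f η ∂ν' := by
    unfold Qt
    rw [integral_map measurable_theta.aemeasurable hf.measurable.aestronglyMeasurable]
    have := Kernel.integral_comp (κ := Kernel.const Unit ν') (η := E.P t) (a := ())
      (f := fun η => f (θL 0 η)) (by
        rw [Kernel.comp_apply, Kernel.const_apply]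
        exact integrable_theta hf _)
    rw [Kernel.comp_apply, Kernel.const_apply] at this
    refine this.trans ?_
    refine integral_congr_ae ?_
    filter_upwards [hLO] with η hη
    simp [S, max_eq_left ht, R_of_LO0 hη]
  rw [e1]
  have l1 := hlim _ (S_continuous E hf t)
  have l2 := hlim f hf
  have l3 : Tendsto (fun z : ℝ × Config => A E z.1 (S E t f) z.2 - A E z.1 f z.2) U (𝓝 0) := by
    have hz : Tendsto (fun z : ℝ × Config => 2 * B * t * z.1⁻¹) U (𝓝 0) := by
      simpa using (tendsto_inv_atTop_zero.comp hT).const_mul (2 * B * t)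
    refine squeeze_zero_norm' ?_ hz
    filter_upwards [hpos] with z hz
    exact A_shift E hf hB ht hz z.2
  exact sub_eq_zero.1 (tendsto_nhds_unique (l1.sub l2) l3)

theorem ergodic (ν : Measure Config)
    (huniq : ∀ ν' : Measure Config, IsProbabilityMeasure ν' → ν' LO₀ = 1 →
      (∀ t : ℝ, 0 ≤ t → Qt E t ν' = ν') → ν' = ν)
    {f : Config → ℝ} (hf : Continuous f) :
    Tendsto (fun z : ℝ × Config => A E z.1 f z.2) (atTop ×ˢ ⊤) (𝓝 (∫ x, f x ∂ν)) := by
  rw [tendsto_iff_ultrafilter]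
  intro U hU
  obtain ⟨ν', h1, h2, h3, h4⟩ := exists_inv E U hU
  rw [← huniq ν' h1 h2 h3]
  exact h4 f hf

/-- the speed -/
def vel (ν : Measure Config) : ℝ := E.p * (ν {η' : Config | η' 1 = false}).toReal - (1 - E.p)

theorem mean_uniform (ν : Measure Config)
    (huniq : ∀ ν' : Measure Config, IsProbabilityMeasure ν' → ν' LO₀ = 1 →
      (∀ t : ℝ, 0 ≤ t → Qt E t ν' = ν') → ν' = ν) {δ : ℝ} (hδ : 0 < δ) :
    ∃ T : ℝ, 0 < T ∧ ∀ ω ∈ LO₀,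
      |∫ η, ((front η : ℤ) : ℝ) ∂(E.P T ω) - T * vel E ν| ≤ T * δ := by
  have h := ergodic E ν huniq continuous_g1
  have h4 : ∫ ω : Config, g1 ω ∂ν = (ν {η' : Config | η' 1 = false}).toReal := by
    have : g1 = Set.indicator {ω : Config | ω 1 = false} 1 := by
      funext ω; simp [g1, Set.indicator_apply]
    rw [this, integral_indicator_one
      (measurableSet_eq_fun (measurable_pi_apply 1) measurable_const)]
    rfl
  rw [h4] at h
  have h5 := (Metric.tendsto_nhds.1 h) δ hδ
  rw [eventually_prod_iff] at h5
  obtain ⟨pa, hpa, pb, hpb, hab⟩ := h5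
  obtain ⟨T, hT, hT0⟩ := (hpa.and (eventually_gt_atTop 0)).exists
  refine ⟨T, hT0, fun ω hω => ?_⟩
  have h6 := hab hT (y := ω) (by
    rw [eventually_top] at hpb; exact hpb ω)
  simp only [Real.dist_eq] at h6
  set m := (ν {η' : Config | η' 1 = false}).toReal
  have e : ∫ η, ((front η : ℤ) : ℝ) ∂(E.P T ω) - T * vel E ν = T * (E.p * (A E T g1 ω - m)) := by
    rw [front_mean E hω hT0.le, intervalIntegral.integral_sub
      ((S_intervalIntegrable E continuous_g1 ω _ _).const_mul _) intervalIntegrable_const,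
      intervalIntegral.integral_const_mul, intervalIntegral.integral_const]
    have : ∫ s in (0:ℝ)..T, S E s g1 ω = T * A E T g1 ω := by
      unfold A; field_simp
    rw [this]
    simp only [vel, smul_eq_mul]
    ring
  rw [e, abs_mul, abs_mul, abs_of_pos hT0, abs_of_pos E.hp0]
  have := E.hp1
  have := E.hp0
  gcongr
  nlinarith [abs_nonneg (A E T g1 ω - m)]

end EastLLN


namespace EastLLN

variable (E : EastProcess)

/-- exponential weight -/
def G (a c : ℝ) (η : Config) : ENNReal := ENNReal.ofReal (Real.exp (a * (((front η : ℤ) : ℝ) - c)))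

lemma measurable_G (a c : ℝ) : Measurable (G a c) :=
  ((measurable_frontR.sub_const c).const_mul a).exp.ennreal_ofReal

lemma submult {a v s t : ℝ} (hs : 0 ≤ s) (ht : 0 ≤ t) {K : ENNReal}
    (hK : ∀ ω ∈ LO₀, ∫⁻ ζ, G a (s * v) ζ ∂(E.P s ω) ≤ K) {ω : Config} (hω : ω ∈ LO₀) :
    ∫⁻ ζ, G a ((t + s) * v) ζ ∂(E.P (t + s) ω) ≤ (∫⁻ ζ, G a (t * v) ζ ∂(E.P t ω)) * K := by
  rw [E.semigroup s t hs ht, Kernel.lintegral_comp _ _ _ (measurable_G _ _),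
    ← lintegral_mul_const _ (measurable_G _ _)]
  refine lintegral_mono_ae ?_
  filter_upwards [ae_LO E ht hω.1] with η hη
  have e : ∫⁻ ζ, G a ((t + s) * v) ζ ∂(E.P s η) =
      G a (t * v) η * ∫⁻ ζ, G a (s * v) ζ ∂(E.P s (θL 0 η)) := by
    rw [P_theta E hs hη, lintegral_map (measurable_G _ _) (continuous_shift _).measurable,
      ← lintegral_const_mul (f := fun ζ => G a (s * v) (shift (front η) ζ)) _
        ((measurable_G _ _).comp (continuous_shift _).measurable)]
    refine lintegral_congr_ae ?_
    filter_upwards [ae_LO E hs hη] with ζ hζ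
    unfold G
    rw [(shift_LO hζ _).2, ← ENNReal.ofReal_mul (Real.exp_pos _).le, ← Real.exp_add]
    congr 2
    push_cast
    ring
  rw [e]
  gcongr
  refine hK _ ?_
  rw [← R_theta]
  exact R_LO0 _

lemma exp_quad {a y : ℝ} (ha : |a| ≤ 1) :
    Real.exp (a * y) ≤ 1 + a * y + 2 * a ^ 2 * Real.exp (2 * |y|) := by
  have h1 := Complex.norm_exp_sub_sum_le_norm_mul_exp ((a * y : ℝ) : ℂ) 2
  have hc : Complex.exp ((a * y : ℝ) : ℂ) -
      ∑ m ∈ Finset.range 2, ((a * y : ℝ) : ℂ) ^ m / (m.factorial : ℂ) =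
      ((Real.exp (a * y) - (1 + a * y) : ℝ) : ℂ) := by
    simp [Finset.sum_range_succ]
  rw [hc, Complex.norm_real, Complex.norm_real, Real.norm_eq_abs, Real.norm_eq_abs] at h1
  have h2 := (abs_le.1 h1).2
  have h3 : |a * y| ≤ |y| := by
    rw [abs_mul]; exact mul_le_of_le_one_left (abs_nonneg _) ha
  have h4 := Real.quadratic_le_exp_of_nonneg (abs_nonneg y)
  have h5 : Real.exp |a * y| ≤ Real.exp |y| := Real.exp_le_exp.2 h3
  have h6 : Real.exp (2 * |y|) = Real.exp |y| * Real.exp |y| := by rw [← Real.exp_add]; ring_nf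
  have h7 : |a * y| ^ 2 = a ^ 2 * |y| ^ 2 := by rw [abs_mul, mul_pow, sq_abs a]
  have h8 : |y| ^ 2 ≤ 2 * Real.exp |y| := by have := abs_nonneg y; linarith
  have h9 : |a * y| ^ 2 * Real.exp |a * y| ≤ 2 * a ^ 2 * Real.exp (2 * |y|) := by
    rw [h7, h6]
    calc a ^ 2 * |y| ^ 2 * Real.exp |a * y| ≤ a ^ 2 * (2 * Real.exp |y|) * Real.exp |y| := by gcongr
      _ = _ := by ring
  linarith

lemma exp_shift_le (c : ℝ) (η : Config) : Real.exp (2 * |((front η : ℤ) : ℝ) - c|) ≤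
    Real.exp (2 * |c|) * Real.exp (2 * |((front η : ℤ) : ℝ)|) := by
  rw [← Real.exp_add]
  refine Real.exp_le_exp.2 ?_
  have := abs_sub ((front η : ℤ) : ℝ) c
  linarith

lemma exp_a_le {a : ℝ} (ha : |a| ≤ 1) (c : ℝ) (η : Config) :
    Real.exp (a * (((front η : ℤ) : ℝ) - c)) ≤
      Real.exp (2 * |c|) * Real.exp (2 * |((front η : ℤ) : ℝ)|) := by
  refine le_trans (Real.exp_le_exp.2 ?_) (exp_shift_le c η)
  refine (le_abs_self _).trans ?_
  rw [abs_mul]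
  have := abs_nonneg (((front η : ℤ) : ℝ) - c)
  nlinarith

lemma crude {a : ℝ} (ha : |a| ≤ 1) {t c : ℝ} (ht : 0 ≤ t) {ω : Config} (hω : ω ∈ LO₀) :
    ∫⁻ ζ, G a c ζ ∂(E.P t ω) ≤ ENNReal.ofReal (Real.exp (2 * |c|) * Real.exp (CC * t)) := by
  calc ∫⁻ ζ, G a c ζ ∂(E.P t ω)
      ≤ ∫⁻ ζ, ENNReal.ofReal (Real.exp (2 * |c|)) *
          ENNReal.ofReal (Real.exp (2 * |((front ζ : ℤ) : ℝ)|)) ∂(E.P t ω) := by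
        refine lintegral_mono fun ζ => ?_
        rw [← ENNReal.ofReal_mul (Real.exp_pos _).le]
        exact ENNReal.ofReal_le_ofReal (exp_a_le ha c ζ)
    _ = ENNReal.ofReal (Real.exp (2 * |c|)) *
          ∫⁻ ζ, ENNReal.ofReal (Real.exp (2 * |((front ζ : ℤ) : ℝ)|)) ∂(E.P t ω) :=
        lintegral_const_mul' _ _ ENNReal.ofReal_ne_top
    _ ≤ _ := by
        rw [ENNReal.ofReal_mul (Real.exp_pos _).le]
        gcongr
        exact expmom_lintegral E hω ht

lemma one_step {a : ℝ} (ha : |a| ≤ 1) {T c δ : ℝ} (hT : 0 ≤ T) {ω : Config} (hω : ω ∈ LO₀)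
    (hm : |∫ η, ((front η : ℤ) : ℝ) ∂(E.P T ω) - c| ≤ δ) :
    ∫⁻ ζ, G a c ζ ∂(E.P T ω) ≤ ENNReal.ofReal
      (1 + |a| * δ + 2 * a ^ 2 * (Real.exp (2 * |c|) * Real.exp (CC * T))) := by
  have iF : Integrable (fun η => ((front η : ℤ) : ℝ)) (E.P T ω) := by
    have := front_integrable E hω hT
    exact (integrable_norm_iff measurable_frontR.aestronglyMeasurable).1 this
  have iX := expmom_integrable E hω hT
  have iG : Integrable (fun η => Real.exp (a * (((front η : ℤ) : ℝ) - c))) (E.P T ω) := by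
    refine (iX.const_mul (Real.exp (2 * |c|))).mono'
      ((measurable_frontR.sub_const c).const_mul a).exp.aestronglyMeasurable ?_
    refine Eventually.of_forall fun η => ?_
    rw [Real.norm_eq_abs, Real.abs_exp]
    exact exp_a_le ha c η
  unfold G
  rw [← ofReal_integral_eq_lintegral_ofReal iG (Eventually.of_forall fun η => (Real.exp_pos _).le)]
  refine ENNReal.ofReal_le_ofReal ?_
  have i1 : Integrable (fun η => 1 + a * (((front η : ℤ) : ℝ) - c)) (E.P T ω) :=
    (integrable_const _).add ((iF.sub (integrable_const c)).const_mul a)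
  have i2 : Integrable (fun η => 2 * a ^ 2 * Real.exp (2 * |c|) *
      Real.exp (2 * |((front η : ℤ) : ℝ)|)) (E.P T ω) := iX.const_mul _
  have e0 : ∫ η, (1 + a * (((front η : ℤ) : ℝ) - c)) ∂(E.P T ω) =
      1 + a * (∫ η, ((front η : ℤ) : ℝ) ∂(E.P T ω) - c) := by
    have i3 : Integrable (fun η => ((front η : ℤ) : ℝ) - c) (E.P T ω) :=
      iF.sub (integrable_const c)
    have i4 : Integrable (fun η => a * (((front η : ℤ) : ℝ) - c)) (E.P T ω) := i3.const_mul a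
    rw [integral_add (integrable_const _) i4,
      integral_const_mul, integral_sub iF (integrable_const c)]
    simp
  calc ∫ η, Real.exp (a * (((front η : ℤ) : ℝ) - c)) ∂(E.P T ω)
      ≤ ∫ η, ((1 + a * (((front η : ℤ) : ℝ) - c)) + 2 * a ^ 2 * Real.exp (2 * |c|) *
          Real.exp (2 * |((front η : ℤ) : ℝ)|)) ∂(E.P T ω) := by
        refine integral_mono iG (i1.add i2) fun η => ?_
        refine (exp_quad ha).trans ?_
        have := exp_shift_le c η
        rw [mul_assoc (2 * a ^ 2)]
        gcongr
    _ = 1 + a * (∫ η, ((front η : ℤ) : ℝ) ∂(E.P T ω) - c) + 2 * a ^ 2 * Real.exp (2 * |c|) *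
          ∫ η, Real.exp (2 * |((front η : ℤ) : ℝ)|) ∂(E.P T ω) := by
        rw [integral_add i1 i2, e0, integral_const_mul]
    _ ≤ _ := by
        have h1 : a * (∫ η, ((front η : ℤ) : ℝ) ∂(E.P T ω) - c) ≤ |a| * δ := by
          refine (le_abs_self _).trans ?_
          rw [abs_mul]
          gcongr
        have h2 := expmom_integral E hω hT
        have h3 : 2 * a ^ 2 * Real.exp (2 * |c|) *
            ∫ η, Real.exp (2 * |((front η : ℤ) : ℝ)|) ∂(E.P T ω) ≤
            2 * a ^ 2 * Real.exp (2 * |c|) * Real.exp (CC * T) := by gcongr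
        rw [← mul_assoc (2 * a ^ 2)]
        linarith

lemma iterate {a v T ρ K : ℝ} (hT : 0 ≤ T) (hK : 0 ≤ K)
    (h1 : ∀ ω ∈ LO₀, ∫⁻ ζ, G a (T * v) ζ ∂(E.P T ω) ≤ ENNReal.ofReal (Real.exp ρ))
    (h0 : ∀ ω ∈ LO₀, ∀ r, 0 ≤ r → r ≤ T →
      ∫⁻ ζ, G a (r * v) ζ ∂(E.P r ω) ≤ ENNReal.ofReal K) (n : ℕ) :
    ∀ ω ∈ LO₀, ∀ r, 0 ≤ r → r ≤ T →
      ∫⁻ ζ, G a ((n * T + r) * v) ζ ∂(E.P (n * T + r) ω) ≤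
        ENNReal.ofReal (Real.exp (n * ρ) * K) := by
  induction n with
  | zero => intro ω hω r hr hr'; simpa using h0 ω hω r hr hr'
  | succ n ih =>
    intro ω hω r hr hr'
    have := submult E (a := a) (v := v) (s := n * T + r) (t := T) (by positivity) hT
      (fun ω' hω' => ih ω' hω' r hr hr') hω
    have e : ((n + 1 : ℕ) : ℝ) * T + r = T + (n * T + r) := by push_cast; ring
    rw [e]
    refine this.trans ?_
    have e2 : Real.exp (((n + 1 : ℕ) : ℝ) * ρ) * K = Real.exp ρ * (Real.exp (n * ρ) * K) := by
      rw [← mul_assoc, ← Real.exp_add]; congr 2; push_cast; ring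
    rw [e2, ENNReal.ofReal_mul (Real.exp_pos ρ).le]
    exact mul_le_mul' (h1 ω hω) le_rfl

lemma iterate_all {a v T b K : ℝ} (hT : 0 < T) (hK : 0 ≤ K) (hb : 0 ≤ b)
    (h1 : ∀ ω ∈ LO₀, ∫⁻ ζ, G a (T * v) ζ ∂(E.P T ω) ≤ ENNReal.ofReal (Real.exp (b * T)))
    (h0 : ∀ ω ∈ LO₀, ∀ r, 0 ≤ r → r ≤ T →
      ∫⁻ ζ, G a (r * v) ζ ∂(E.P r ω) ≤ ENNReal.ofReal K) {t : ℝ} (ht : 0 ≤ t) :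
    ∀ ω ∈ LO₀, ∫⁻ ζ, G a (t * v) ζ ∂(E.P t ω) ≤ ENNReal.ofReal (Real.exp (b * t) * K) := by
  intro ω hω
  have f1 := Nat.floor_le (div_nonneg ht hT.le)
  have f2 := (Nat.lt_floor_add_one (t / T)).le
  rw [le_div_iff₀ hT] at f1
  rw [div_le_iff₀ hT] at f2
  have := iterate E hT.le hK h1 h0 ⌊t / T⌋₊ ω hω (t - ⌊t / T⌋₊ * T) (by linarith) (by linarith)
  rw [add_sub_cancel] at this
  refine this.trans (ENNReal.ofReal_le_ofReal ?_)
  gcongr ?_ * K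
  refine Real.exp_le_exp.2 ?_
  nlinarith

theorem lln (ν : Measure Config)
    (huniq : ∀ ν' : Measure Config, IsProbabilityMeasure ν' → ν' LO₀ = 1 →
      (∀ t : ℝ, 0 ≤ t → Qt E t ν' = ν') → ν' = ν) :
    ∀ ω ∈ LO₀, ∀ ε : ℝ, 0 < ε →
      Tendsto (fun t : ℝ => E.P t ω {η ∈ LO | ε < |(front η : ℝ) / t - vel E ν|})
        atTop (𝓝 0) := by
  intro ω hω ε hε
  set v := vel E ν with hv
  obtain ⟨T, hT, hmean⟩ := mean_uniform E ν huniq (δ := ε / 2) (by linarith)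
  rw [← hv] at hmean
  set D : ℝ := 2 * (Real.exp (2 * |T * v|) * Real.exp (CC * T)) with hD
  have hDpos : 0 < D := by positivity
  set l : ℝ := min 1 (T * ε / (4 * D)) with hl
  have hlpos : 0 < l := by positivity
  have hl1 : l ≤ 1 := min_le_left _ _
  have hlD : l * D ≤ T * ε / 4 := by
    have : l ≤ T * ε / (4 * D) := min_le_right _ _
    rw [le_div_iff₀ (by positivity)] at this
    linarith
  have bound : ∀ a : ℝ, |a| = l → ∀ t : ℝ, 0 ≤ t →
      ∫⁻ ζ, G a (t * v) ζ ∂(E.P t ω) ≤ ENNReal.ofReal (Real.exp (3 / 4 * l * ε * t) * D) := by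
    intro a ha t ht
    have ha1 : |a| ≤ 1 := by rw [ha]; exact hl1
    refine iterate_all E hT hDpos.le (by positivity) ?_ ?_ ht ω hω
    · intro ω' hω'
      refine (one_step E ha1 hT.le hω' (hmean ω' hω')).trans (ENNReal.ofReal_le_ofReal ?_)
      have h2 : a ^ 2 = l ^ 2 := by rw [← ha, sq_abs]
      rw [ha, h2]
      have h3 := Real.add_one_le_exp (3 / 4 * l * ε * T)
      have h4 : 2 * l ^ 2 * (Real.exp (2 * |T * v|) * Real.exp (CC * T)) = l * (l * D) := by
        rw [hD]; ring
      rw [h4]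
      have h5 : l * (l * D) ≤ l * (T * ε / 4) := by gcongr
      nlinarith
    · intro ω' hω' r hr hr'
      refine (crude E ha1 hr hω').trans (ENNReal.ofReal_le_ofReal ?_)
      have h6 : Real.exp (2 * |r * v|) ≤ Real.exp (2 * |T * v|) := by
        refine Real.exp_le_exp.2 ?_
        rw [abs_mul, abs_mul, abs_of_nonneg hr, abs_of_pos hT]
        gcongr
      have h7 : Real.exp (CC * r) ≤ Real.exp (CC * T) := by
        refine Real.exp_le_exp.2 ?_
        have := CC_pos
        gcongr
      have h8 : Real.exp (2 * |r * v|) * Real.exp (CC * r) ≤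
          Real.exp (2 * |T * v|) * Real.exp (CC * T) := by gcongr
      have h9 : 0 < Real.exp (2 * |T * v|) * Real.exp (CC * T) := by positivity
      rw [hD]
      linarith
  have tail : ∀ a : ℝ, |a| = l → ∀ t : ℝ, 0 ≤ t →
      E.P t ω {η | ENNReal.ofReal (Real.exp (l * ε * t)) ≤ G a (t * v) η} ≤
        ENNReal.ofReal (Real.exp (-(l * ε / 4) * t) * D) := by
    intro a ha t ht
    have hpos : 0 < Real.exp (l * ε * t) := Real.exp_pos _
    refine (meas_ge_le_lintegral_div (measurable_G _ _).aemeasurable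
      (by simpa using hpos) ENNReal.ofReal_ne_top).trans ?_
    refine (ENNReal.div_le_div_right (bound a ha t ht) _).trans ?_
    rw [← ENNReal.ofReal_div_of_pos hpos]
    refine ENNReal.ofReal_le_ofReal (le_of_eq ?_)
    have he : Real.exp (3 / 4 * l * ε * t) =
        Real.exp (-(l * ε / 4) * t) * Real.exp (l * ε * t) := by
      rw [← Real.exp_add]; congr 1; ring
    rw [div_eq_iff hpos.ne', he]
    ring
  have hlim : Tendsto (fun t : ℝ => ENNReal.ofReal (Real.exp (-(l * ε / 4) * t) * D) +
      ENNReal.ofReal (Real.exp (-(l * ε / 4) * t) * D)) atTop (𝓝 0) := by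
    have h1 : Tendsto (fun t : ℝ => Real.exp (-(l * ε / 4) * t) * D) atTop (𝓝 0) := by
      have : Tendsto (fun t : ℝ => Real.exp (-(l * ε / 4) * t)) atTop (𝓝 0) :=
        Real.tendsto_exp_atBot.comp
          (tendsto_id.const_mul_atTop_of_neg (by have : 0 < l * ε := by positivity
                                                 linarith))
      simpa using this.mul_const D
    have h2 := ENNReal.tendsto_ofReal h1
    rw [ENNReal.ofReal_zero] at h2
    simpa using h2.add h2
  refine tendsto_of_tendsto_of_tendsto_of_le_of_le' tendsto_const_nhds hlim
    (Eventually.of_forall fun _ => bot_le) ?_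
  filter_upwards [eventually_gt_atTop 0] with t ht
  have hsub : {η ∈ LO | ε < |(front η : ℝ) / t - v|} ⊆
      {η | ENNReal.ofReal (Real.exp (l * ε * t)) ≤ G l (t * v) η} ∪
      {η | ENNReal.ofReal (Real.exp (l * ε * t)) ≤ G (-l) (t * v) η} := by
    rintro η ⟨-, hη⟩
    have e : (front η : ℝ) / t - v = ((front η : ℝ) - t * v) / t := by field_simp
    rw [e, abs_div, abs_of_pos ht, lt_div_iff₀ ht] at hη
    rcases lt_abs.1 hη with h | h
    · left
      refine ENNReal.ofReal_le_ofReal (Real.exp_le_exp.2 ?_)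
      rw [mul_assoc]
      gcongr
    · right
      refine ENNReal.ofReal_le_ofReal (Real.exp_le_exp.2 ?_)
      rw [mul_assoc, neg_mul, ← mul_neg]
      gcongr
  refine (measure_mono hsub).trans ((measure_union_le _ _).trans ?_)
  exact add_le_add (tail l (abs_of_pos hlpos) t ht.le)
    (tail (-l) (by rw [abs_neg, abs_of_pos hlpos]) t ht.le)

end EastLLN

/-- **Law of large numbers for the front** (Theorem 6.1 of the paper): if `ν` is the
invariant measure of the process seen from the front and `v = p ν(1 − ω₁) − q`, then for
every `ω ∈ LO₀`, `X(ω(t))/t → v` in `P_ω`-probability as `t → ∞`. -/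
theorem front_law_of_large_numbers (E : EastProcess) (hgap : 0 < gap E)
    (ν : Measure Config) (hν : IsProbabilityMeasure ν) (hν0 : ν LO₀ = 1)
    (hinv : ∀ t : ℝ, 0 ≤ t → Qt E t ν = ν)
    (huniq : ∀ ν' : Measure Config, IsProbabilityMeasure ν' → ν' LO₀ = 1 →
      (∀ t : ℝ, 0 ≤ t → Qt E t ν' = ν') → ν' = ν) :
    ∀ ω ∈ LO₀, ∀ ε : ℝ, 0 < ε →
      Tendsto (fun t : ℝ =>
          E.P t ω {η ∈ LO |
            ε < |(front η : ℝ) / t -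
              (E.p * (ν {η' : Config | η' 1 = false}).toReal - (1 - E.p))|})
        atTop (𝓝 0) := by
  intro ω hω ε hε
  exact EastLLN.lln E ν huniq ω hω ε hε

end
end

section
/- Let ν be the unique probability measure on LO_0 invariant for the process seen from the front (i.e. Q_t ν = ν for all t ≥ 0, where Q_t π is the pushforward under θ of ∫ P_t(ω,·) dπ(ω)), and set v = p·ν({η : η_1 = 0}) − q. Then for every ω ∈ LO_0: (1/t)·∫ X(η) dP_t(ω, dη) → v as t → ∞ (convergence of the mean front position, the integral being over η ∈ LO). -/
open MeasureTheory ProbabilityTheory Filter Topology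

noncomputable section

open scoped CompactlySupported

section Part1
lemma exists_bdd {f : Config → ℝ} (hf : Continuous f) : ∃ C, 0 ≤ C ∧ ∀ ω, |f ω| ≤ C := by
  obtain ⟨C, hC⟩ := isCompact_univ.exists_bound_of_continuousOn hf.continuousOn
  exact ⟨|C|, abs_nonneg _, fun ω => (hC ω (Set.mem_univ _)).trans (le_abs_self C)⟩

lemma integrable_cont {m : Measure Config} [IsFiniteMeasure m] {f : Config → ℝ}
    (hf : Continuous f) : Integrable f m := by
  obtain ⟨C, -, hC⟩ := exists_bdd hf
  exact Integrable.of_bound hf.aestronglyMeasurable C (Eventually.of_forall hC)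

/-- The semigroup acting on functions. -/
def Pf (E : EastProcess) (t : ℝ) (f : Config → ℝ) (ω : Config) : ℝ := ∫ η, f η ∂(E.P t ω)

variable (E : EastProcess)

instance (t : ℝ) : IsMarkovKernel (E.P t) := E.markov t

lemma Pf_bound {f : Config → ℝ} {C : ℝ} (hC : ∀ ω, |f ω| ≤ C) (t : ℝ) (ω : Config) :
    |Pf E t f ω| ≤ C := by
  have := norm_integral_le_of_norm_le_const (μ := E.P t ω) (f := f) (C := C)
    (Eventually.of_forall hC)
  simpa [Pf] using this

lemma Pf_zero (f : Config → ℝ) (hf : Continuous f) (ω : Config) : Pf E 0 f ω = f ω := by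
  unfold Pf
  rw [E.P0, Kernel.id_apply, integral_dirac' _ _ hf.stronglyMeasurable]

lemma Pf_comp' {s t : ℝ} (hs : 0 ≤ s) (ht : 0 ≤ t) {f : Config → ℝ} (ω : Config)
    (hf : Integrable f (E.P (t + s) ω)) :
    Pf E t (Pf E s f) ω = Pf E (t + s) f ω := by
  unfold Pf
  rw [E.semigroup s t hs ht] at hf ⊢
  rw [Kernel.integral_comp hf]

lemma Pf_comp {s t : ℝ} (hs : 0 ≤ s) (ht : 0 ≤ t) {f : Config → ℝ} (hf : Continuous f)
    (ω : Config) : Pf E t (Pf E s f) ω = Pf E (t + s) f ω :=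
  Pf_comp' E hs ht ω (integrable_cont hf)

lemma Pf_meas {f : Config → ℝ} (hf : Continuous f) :
    StronglyMeasurable (Function.uncurry fun (s : ℝ) (ω : Config) => Pf E s f ω) := by
  have h := stronglyMeasurable_uncurry_of_continuous_of_stronglyMeasurable
    (u := fun (s : ℝ) (ω : Config) => Pf E s f ω)
    (fun ω => E.timeCont f hf ω)
    (fun s => by
      have : StronglyMeasurable (Function.uncurry fun (_ : Config) (η : Config) => f η) :=
        hf.stronglyMeasurable.comp_measurable measurable_snd
      exact StronglyMeasurable.integral_kernel_prod_right (κ := E.P s) this)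
  exact h

/-- resolvent at 1 -/
def Res (h : Config → ℝ) (ω : Config) : ℝ := ∫ s in Set.Ioi (0:ℝ), Real.exp (-s) * Pf E s h ω

lemma expint (a : ℝ) {k : ℝ → ℝ} (hk : AEStronglyMeasurable k (volume.restrict (Set.Ioi a))) {C : ℝ}
    (hC : ∀ s, |k s| ≤ C) :
    IntegrableOn (fun s => Real.exp (-s) * k s) (Set.Ioi a) := by
  have h1 : IntegrableOn (fun s => Real.exp (-s)) (Set.Ioi a) := integrableOn_exp_neg_Ioi a
  exact Integrable.mul_bdd h1 hk (Eventually.of_forall hC)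

lemma Res_cont {h : Config → ℝ} (hh : Continuous h) : Continuous (Res E h) := by
  obtain ⟨C, -, hC⟩ := exists_bdd hh
  unfold Res
  apply continuous_of_dominated (bound := fun s => Real.exp (-s) * C)
  · intro ω
    have : Continuous fun s => Pf E s h ω := E.timeCont h hh ω
    fun_prop
  · intro ω
    refine Eventually.of_forall fun s => ?_
    rw [norm_mul, Real.norm_of_nonneg (Real.exp_pos _).le]
    exact mul_le_mul_of_nonneg_left (Pf_bound E hC s ω) (Real.exp_pos _).le
  · exact (integrableOn_exp_neg_Ioi 0).mul_const C
  · filter_upwards [ae_restrict_mem measurableSet_Ioi] with s hs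
    exact continuous_const.mul (E.feller s (le_of_lt hs) h hh)

lemma Pf_Res {h : Config → ℝ} (hh : Continuous h) {t : ℝ} (ht : 0 ≤ t) (ω : Config) :
    Pf E t (Res E h) ω =
      Real.exp t * (Res E h ω - ∫ r in (0:ℝ)..t, Real.exp (-r) * Pf E r h ω) := by
  obtain ⟨C, -, hC⟩ := exists_bdd hh
  have hc : Continuous fun s => Pf E s h ω := E.timeCont h hh ω
  have h1 : Pf E t (Res E h) ω = ∫ s in Set.Ioi (0:ℝ), Real.exp (-s) * Pf E (t + s) h ω := by
    unfold Res
    change ∫ η, (∫ s in Set.Ioi (0:ℝ), Real.exp (-s) * Pf E s h η) ∂(E.P t ω) = _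
    rw [integral_integral_swap]
    · refine setIntegral_congr_fun measurableSet_Ioi fun s hs => ?_
      rw [integral_const_mul]
      congr 1
      exact Pf_comp E (le_of_lt hs) ht hh ω
    · have hm := (Pf_meas E hh).comp_measurable (measurable_swap (α := Config) (β := ℝ))
      have hi : Integrable (fun z : Config × ℝ => (1:ℝ) * Real.exp (-z.2))
          ((E.P t ω).prod (volume.restrict (Set.Ioi (0:ℝ)))) :=
        Integrable.mul_prod (integrable_const (1:ℝ)) (integrableOn_exp_neg_Ioi 0)
      have := Integrable.mul_bdd hi hm.aestronglyMeasurable (c := C)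
        (Eventually.of_forall fun z => Pf_bound E hC z.2 z.1)
      refine this.congr (Eventually.of_forall fun z => ?_)
      simp [Function.uncurry]
  have h2 : ∫ s in Set.Ioi (0:ℝ), Real.exp (-s) * Pf E (t + s) h ω
      = Real.exp t * ∫ r in Set.Ioi t, Real.exp (-r) * Pf E r h ω := by
    have := (measurePreserving_add_left volume t).setIntegral_preimage_emb
      (measurableEmbedding_addLeft t) (fun r => Real.exp (-r) * Pf E r h ω) (Set.Ioi t)
    have hpre : (fun x => t + x) ⁻¹' Set.Ioi t = Set.Ioi 0 := by
      ext x; simp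
    rw [hpre] at this
    rw [← this, ← integral_const_mul]
    refine setIntegral_congr_fun measurableSet_Ioi fun s hs => ?_
    rw [← mul_assoc, ← Real.exp_add]
    ring_nf
  rw [h1, h2]
  congr 1
  have hi := expint 0 hc.aestronglyMeasurable (fun s => Pf_bound E hC s ω)
  have hi2 := expint t hc.aestronglyMeasurable (fun s => Pf_bound E hC s ω)
  have := intervalIntegral.integral_Ioi_sub_Ioi hi ht
  unfold Res
  linarith

lemma Pf_Res_deriv {h : Config → ℝ} (hh : Continuous h) (t : ℝ) (ω : Config) :
    HasDerivAt (fun t => Real.exp t * (Res E h ω - ∫ r in (0:ℝ)..t, Real.exp (-r) * Pf E r h ω))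
      (Real.exp t * (Res E h ω - ∫ r in (0:ℝ)..t, Real.exp (-r) * Pf E r h ω) - Pf E t h ω) t := by
  have hc : Continuous fun s => Pf E s h ω := E.timeCont h hh ω
  have hc2 : Continuous fun r => Real.exp (-r) * Pf E r h ω := by fun_prop
  have h1 := (hc2.integral_hasStrictDerivAt 0 t).hasDerivAt
  have h2 := (Real.hasDerivAt_exp t).mul (h1.const_sub (Res E h ω))
  refine h2.congr_deriv ?_
  have : Real.exp t * Real.exp (-t) = 1 := by rw [← Real.exp_add]; simp
  rw [mul_neg, ← mul_assoc, this]
  ring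

lemma maxprinc {w : Config → ℝ} (hw : Continuous w)
    (hd : ∀ ω, HasDerivWithinAt (fun u : ℝ => Pf E u w ω) (w ω) (Set.Ici 0) 0) (ω : Config) :
    w ω ≤ 0 := by
  obtain ⟨z, -, hz⟩ := isCompact_univ.exists_isMaxOn (Set.univ_nonempty) hw.continuousOn
  have hz' : ∀ η, w η ≤ w z := fun η => hz (Set.mem_univ η)
  refine (hz' ω).trans ?_
  have h1 := (hd z).Ioi_of_Ici
  rw [hasDerivWithinAt_iff_tendsto_slope' (by simp)] at h1
  refine le_of_tendsto h1 ?_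
  filter_upwards [self_mem_nhdsWithin] with t ht
  rw [slope_def_field, Pf_zero E w hw]
  apply div_nonpos_of_nonpos_of_nonneg
  · have : Pf E t w z ≤ w z := by
      have := integral_mono (integrable_cont (m := E.P t z) hw) (integrable_const (w z)) hz'
      simpa [Pf] using this
    linarith
  · simpa using le_of_lt ht

lemma Pf_sub {f g : Config → ℝ} (hf : Continuous f) (hg : Continuous g) (t : ℝ) (ω : Config) :
    Pf E t (fun η => f η - g η) ω = Pf E t f ω - Pf E t g ω :=
  integral_sub (integrable_cont hf) (integrable_cont hg)

lemma dynkin_abs {f g : Config → ℝ} (hf : Continuous f) (hg : Continuous g)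
    (hd : ∀ ω, HasDerivWithinAt (fun u : ℝ => Pf E u f ω) (g ω) (Set.Ici 0) 0)
    {t : ℝ} (ht : 0 ≤ t) (ω : Config) :
    Pf E t f ω = f ω + ∫ s in (0:ℝ)..t, Pf E s g ω := by
  have hh : Continuous fun η => f η - g η := hf.sub hg
  set h : Config → ℝ := fun η => f η - g η with hdef
  have hu := Res_cont E hh
  have hdu : ∀ ω, HasDerivWithinAt (fun u : ℝ => Pf E u (Res E h) ω) (Res E h ω - h ω)
      (Set.Ici 0) 0 := by
    intro ω
    have h1 := (Pf_Res_deriv E hh 0 ω).hasDerivWithinAt (s := Set.Ici 0)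
    simp only [Real.exp_zero, intervalIntegral.integral_same, sub_zero, one_mul, Pf_zero E h hh]
      at h1
    refine h1.congr (fun u hu => Pf_Res E hh hu ω) ?_
    simpa using Pf_Res E hh le_rfl ω
  have e1 : ∀ ω, f ω - Res E h ω ≤ 0 := by
    refine maxprinc E (w := fun ω => f ω - Res E h ω) (hf.sub hu) fun ω => ?_
    have := (hd ω).sub (hdu ω)
    refine (this.congr_deriv (by simp only [hdef]; ring)).congr (fun u _ => ?_) ?_ <;>
    exact Pf_sub E hf hu _ _
  have e2 : ∀ ω, Res E h ω - f ω ≤ 0 := by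
    refine maxprinc E (w := fun ω => Res E h ω - f ω) (hu.sub hf) fun ω => ?_
    have := (hdu ω).sub (hd ω)
    refine (this.congr_deriv (by simp only [hdef]; ring)).congr (fun u _ => ?_) ?_ <;>
    exact Pf_sub E hu hf _ _
  have e : f = Res E h := by
    ext η; linarith [e1 η, e2 η]
  have hc : Continuous fun s => Pf E s g ω := E.timeCont g hg ω
  have key : ∀ s, 0 ≤ s → Pf E s f ω =
      Real.exp s * (Res E h ω - ∫ r in (0:ℝ)..s, Real.exp (-r) * Pf E r h ω) := by
    intro s hs
    rw [← Pf_Res E hh hs ω, ← e]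
  have := intervalIntegral.integral_eq_sub_of_hasDerivAt (a := 0) (b := t)
    (f := fun t => Real.exp t * (Res E h ω - ∫ r in (0:ℝ)..t, Real.exp (-r) * Pf E r h ω))
    (f' := fun s => Pf E s g ω) ?_ (hc.intervalIntegrable _ _)
  · rw [this, ← key t ht, ← key 0 le_rfl, Pf_zero E f hf]; ring
  · intro s hs
    rw [Set.uIcc_of_le ht] at hs
    refine (Pf_Res_deriv E hh s ω).congr_deriv ?_
    rw [← key s hs.1, Pf_sub E hf hg]; ring

end Part1

section Part2
lemma cyl_cont {β : Type*} [TopologicalSpace β] (f : Config → β) (S : Finset ℤ)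
    (h : ∀ ω ω' : Config, (∀ x ∈ S, ω x = ω' x) → f ω = f ω') : Continuous f := by
  let e : (S → Bool) → Config := fun σ x => if hx : x ∈ S then σ ⟨x, hx⟩ else true
  have : f = (fun σ => f (e σ)) ∘ (fun (ω : Config) (x : S) => ω x) := by
    ext1 ω
    apply h
    intro x hx
    simp [e, hx]
  rw [this]
  exact continuous_of_discreteTopology.comp (by fun_prop)

lemma eastGen_eq_sum (p : ℝ) {f : Config → ℝ} {S : Finset ℤ} (hf : DependsOnF f ↑S) (ω : Config) :
    eastGen p f ω = ∑ x ∈ S, (if ω (x + 1) = false then (1 : ℝ) else 0) *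
    (if ω x = false then p else 1 - p) * (f (flipAt ω x) - f ω) := by
  unfold eastGen
  apply tsum_eq_sum
  intro x hx
  rw [hf (flipAt ω x) ω, sub_self, mul_zero]
  intro y hy
  have : y ≠ x := by rintro rfl; exact hx hy
  simp [flipAt, this]

lemma eastGen_cyl_cont (p : ℝ) {f : Config → ℝ} (hf : IsCylinder f) :
    Continuous (eastGen p f) := by
  obtain ⟨S, hS⟩ := hf
  apply cyl_cont _ (S ∪ S.image (· + 1))
  intro ω ω' h
  rw [eastGen_eq_sum p hS, eastGen_eq_sum p hS]
  apply Finset.sum_congr rfl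
  intro x hx
  have h1 : ω x = ω' x := h x (by simp [hx])
  have h2 : ω (x + 1) = ω' (x + 1) := h _ (by simp [hx])
  have h3 : f ω = f ω' := hS _ _ fun y hy => h y (Finset.mem_union_left _ hy)
  have h4 : f (flipAt ω x) = f (flipAt ω' x) := hS _ _ fun y hy => by
    have := h y (Finset.mem_union_left _ hy)
    simp [flipAt, this, h1]
  rw [h1, h2, h3, h4]

lemma dynkin (E : EastProcess) {f : Config → ℝ} (hf : IsCylinder f) {t : ℝ} (ht : 0 ≤ t)
    (ω : Config) : Pf E t f ω = f ω + ∫ s in (0:ℝ)..t, Pf E s (eastGen E.p f) ω := by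
  have hfc : Continuous f := by
    obtain ⟨S, hS⟩ := hf
    exact cyl_cont f S hS
  exact dynkin_abs E hfc (eastGen_cyl_cont E.p hf) (fun ω => E.generator f hf ω) ht ω

lemma front_unique {ω : Config} {m : ℤ} (h1 : ω m = false) (h2 : ∀ x < m, ω x = true) :
    front ω = m := by
  apply IsLeast.csInf_eq
  refine ⟨h1, fun x hx => ?_⟩
  by_contra hlt
  have := h2 x (not_le.mp hlt)
  simp only [Set.mem_ofPred_eq] at hx
  simp [hx] at this

lemma front_spec {ω : Config} (h : ω ∈ LO) : ω (front ω) = false ∧ ∀ x < front ω, ω x = true := by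
  obtain ⟨⟨y, hy⟩, z, hz⟩ := h
  have hb : BddBelow {x : ℤ | ω x = false} := by
    refine ⟨y, fun x hx => ?_⟩
    by_contra hlt
    have := hy x (not_le.mp hlt)
    simp only [Set.mem_ofPred_eq] at hx
    simp [hx] at this
  refine ⟨Int.csInf_mem ⟨z, hz⟩ hb, fun x hx => ?_⟩
  by_contra hne
  have : x ∈ {x : ℤ | ω x = false} := by simpa using hne
  exact absurd (csInf_le hb this) (not_le.mpr hx)

lemma mem_LO {ω : Config} {m : ℤ} (h1 : ω m = false) (h2 : ∀ x < m, ω x = true) : ω ∈ LO :=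
  ⟨⟨m, h2⟩, m, h1⟩

lemma mem_LO0 {ω : Config} : ω ∈ LO₀ ↔ ω 0 = false ∧ ∀ x < 0, ω x = true := by
  constructor
  · rintro ⟨h, h0⟩
    have := front_spec h
    rwa [h0] at this
  · rintro ⟨h1, h2⟩
    exact ⟨mem_LO h1 h2, front_unique h1 h2⟩

/-- truncated configuration -/
def cutN (N : ℕ) (ω : Config) : Config := fun x =>
  if x < -(N:ℤ) then true else if (N:ℤ) < x then false else ω x

/-- truncated front -/
def XN (N : ℕ) (ω : Config) : ℤ := front (cutN N ω)

/-- characterization of the truncated front -/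
def IsXN (N : ℕ) (ω : Config) (m : ℤ) : Prop :=
  -(N:ℤ) ≤ m ∧ m ≤ N + 1 ∧ (m ≤ N → ω m = false) ∧ ∀ x, -(N:ℤ) ≤ x → x < m → ω x = true

lemma XN_spec (N : ℕ) (ω : Config) : IsXN N ω (XN N ω) := by
  have hLO : cutN N ω ∈ LO := by
    refine ⟨⟨-(N:ℤ), fun x hx => by simp [cutN, hx]⟩, N + 1, ?_⟩
    have : ¬ ((N:ℤ) + 1 < -(N:ℤ)) := by omega
    simp [cutN, this]
  obtain ⟨h1, h2⟩ := front_spec hLO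
  change cutN N ω (XN N ω) = false at h1
  change ∀ x < XN N ω, _ at h2
  generalize XN N ω = m at h1 h2
  have a : -(N:ℤ) ≤ m := by
    by_contra hlt
    simp [cutN, not_le.mp hlt] at h1
  have b : m ≤ N + 1 := by
    by_contra hlt
    have := h2 (N+1) (by omega)
    have h' : ¬ ((N:ℤ) + 1 < -(N:ℤ)) := by omega
    simp [cutN, h'] at this
  refine ⟨a, b, fun c => ?_, fun x hx hxm => ?_⟩
  · simpa [cutN, not_lt.mpr a, not_lt.mpr c] using h1
  · have := h2 x hxm
    have h3 : ¬ (N:ℤ) < x := by omega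
    simpa [cutN, not_lt.mpr hx, h3] using this

lemma XN_unique {N : ℕ} {ω : Config} {m : ℤ} (h : IsXN N ω m) : XN N ω = m := by
  obtain ⟨a, b, c, d⟩ := h
  apply front_unique
  · by_cases hm : m ≤ N
    · simp [cutN, not_lt.mpr a, not_lt.mpr hm, c hm]
    · have : (N:ℤ) < m := by omega
      simp [cutN, not_lt.mpr a, this]
  · intro x hx
    by_cases h1 : x < -(N:ℤ)
    · simp [cutN, h1]
    · have h3 : ¬ (N:ℤ) < x := by omega
      simp [cutN, h1, h3, d x (by omega) hx]

lemma XN_dep (N : ℕ) (ω ω' : Config)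
    (h : ∀ x ∈ Finset.Icc (-(N:ℤ)) N, ω x = ω' x) : XN N ω = XN N ω' := by
  unfold XN
  congr 1
  ext1 x
  unfold cutN
  split_ifs with h1 h2
  · rfl
  · rfl
  · exact h x (by simp; omega)

lemma XN_cont (N : ℕ) : Continuous (XN N) := cyl_cont _ _ (XN_dep N)

lemma XN_comp_cyl (N : ℕ) (G : ℤ → ℝ) : IsCylinder (fun ω => G (XN N ω)) :=
  ⟨Finset.Icc (-(N:ℤ)) N, fun ω ω' h => congrArg G (XN_dep N ω ω' h)⟩

/-- indicator coefficients -/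
def cR (N : ℕ) (ω : Config) : ℝ :=
  if XN N ω ≤ N ∧ ω (XN N ω + 1) = false then 1 else 0
/-- indicator coefficients -/
def cL (N : ℕ) (ω : Config) : ℝ :=
  if -(N:ℤ) < XN N ω ∧ ω (XN N ω) = false then 1 else 0

lemma eastGen_XN (p : ℝ) (N : ℕ) (G : ℤ → ℝ) (ω : Config) :
    eastGen p (fun ω => G (XN N ω)) ω =
      p * cR N ω * (G (XN N ω + 1) - G (XN N ω)) +
      (1 - p) * cL N ω * (G (XN N ω - 1) - G (XN N ω)) := by
  have hs := XN_spec N ω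
  unfold eastGen cR cL
  set m := XN N ω with hm
  obtain ⟨a, b, c, d⟩ := hs
  rw [tsum_eq_sum (s := {m, m - 1})]
  · rw [Finset.sum_pair (by omega)]
    congr 1
    · by_cases h1 : m ≤ N
      · have hw := c h1
        by_cases h2 : ω (m + 1) = false
        · have : XN N (flipAt ω m) = m + 1 := by
            apply XN_unique
            refine ⟨by omega, by omega, fun h => ?_, fun x hx hxm => ?_⟩
            · simp [flipAt, h2]
            · by_cases e : x = m
              · simp [flipAt, e, hw]
              · simp [flipAt, e, d x hx (by omega)]
          simp [h1, h2, hw, this, ← hm]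
        · simp [h2]
      · have : XN N (flipAt ω m) = m := by
          apply XN_dep
          intro x hx
          have : x ≠ m := by simp at hx; omega
          simp [flipAt, this]
        simp [h1, this, ← hm]
    · by_cases h1 : -(N:ℤ) < m
      · have hw := d (m - 1) (by omega) (by omega)
        by_cases h2 : ω m = false
        · have : XN N (flipAt ω (m - 1)) = m - 1 := by
            apply XN_unique
            refine ⟨by omega, by omega, fun h => ?_, fun x hx hxm => ?_⟩
            · simp [flipAt, hw]
            · have e : x ≠ m - 1 := by omega
              simp [flipAt, e, d x hx (by omega)]
          simp [h1, h2, hw, this, ← hm]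
        · simp [h2]
      · have : XN N (flipAt ω (m - 1)) = m := by
          apply XN_dep
          intro x hx
          have : x ≠ m - 1 := by simp at hx; omega
          simp [flipAt, this]
        simp [h1, this, ← hm]
  · intro x hx
    simp only [Finset.mem_insert, Finset.mem_singleton, not_or] at hx
    by_cases h1 : -(N:ℤ) ≤ x ∧ x < m
    · have := d (x + 1) (by omega) (by omega)
      simp [this]
    · have : XN N (flipAt ω x) = m := by
        apply XN_unique
        refine ⟨a, b, fun h => ?_, fun y hy hym => ?_⟩
        · have : m ≠ x := Ne.symm hx.1
          simp [flipAt, this, c h]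
        · have : y ≠ x := by rintro rfl; exact h1 ⟨hy, hym⟩
          simp [flipAt, this, d y hy hym]
      simp [this, ← hm]

lemma cR_mem (N : ℕ) (ω : Config) : 0 ≤ cR N ω ∧ cR N ω ≤ 1 := by
  unfold cR; split_ifs <;> norm_num
lemma cL_mem (N : ℕ) (ω : Config) : 0 ≤ cL N ω ∧ cL N ω ≤ 1 := by
  unfold cL; split_ifs <;> norm_num

variable (E : EastProcess)

/-- general upper bound: if increments of `G` are bounded by `H` -/
lemma gen_le (N : ℕ) (G H : ℤ → ℝ) (h1 : ∀ m, |G (m + 1) - G m| ≤ H m)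
    (h2 : ∀ m, |G (m - 1) - G m| ≤ H m) (ω : Config) :
    |eastGen E.p (fun ω => G (XN N ω)) ω| ≤ H (XN N ω) := by
  rw [eastGen_XN]
  have a := cR_mem N ω
  have b := cL_mem N ω
  have hp := E.hp0
  have hq := E.hp1
  have i1 := h1 (XN N ω)
  have i2 := h2 (XN N ω)
  refine (abs_add_le _ _).trans ?_
  rw [abs_mul (E.p * cR N ω), abs_mul ((1 - E.p) * cL N ω), abs_of_nonneg (mul_nonneg hp.le a.1),
    abs_of_nonneg (mul_nonneg (by linarith) b.1)]
  have hH : 0 ≤ H (XN N ω) := (abs_nonneg _).trans i1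
  have j1 : E.p * cR N ω * |G (XN N ω + 1) - G (XN N ω)| ≤ E.p * H (XN N ω) :=
    mul_le_mul (mul_le_of_le_one_right hp.le a.2) i1 (abs_nonneg _) hp.le
  have j2 : (1 - E.p) * cL N ω * |G (XN N ω - 1) - G (XN N ω)| ≤ (1 - E.p) * H (XN N ω) :=
    mul_le_mul (mul_le_of_le_one_right (by linarith) b.2) i2 (abs_nonneg _) (by linarith)
  linarith

lemma cont_XN_comp (N : ℕ) (G : ℤ → ℝ) : Continuous (fun ω => G (XN N ω)) :=
  continuous_of_discreteTopology.comp (XN_cont N)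

lemma Pf_mono {f g : Config → ℝ} (hf : Continuous f) (hg : Continuous g) (h : ∀ ω, f ω ≤ g ω)
    (t : ℝ) (ω : Config) : Pf E t f ω ≤ Pf E t g ω :=
  integral_mono (integrable_cont hf) (integrable_cont hg) h

lemma absmom (N : ℕ) {t : ℝ} (ht : 0 ≤ t) (ω : Config) :
    Pf E t (fun η => |(XN N η : ℝ)|) ω ≤ |(XN N ω : ℝ)| + t := by
  let G : ℤ → ℝ := fun m => |(m:ℝ)|
  have hb := gen_le E N G (fun _ => 1)
    (fun m => (abs_abs_sub_abs_le _ _).trans (by push_cast; simp))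
    (fun m => (abs_abs_sub_abs_le _ _).trans (by push_cast; simp))
  have h := dynkin E (XN_comp_cyl N G) ht ω
  have h1 : ∫ s in (0:ℝ)..t, Pf E s (eastGen E.p fun ω => G (XN N ω)) ω ≤ t := by
    have := intervalIntegral.norm_integral_le_of_norm_le_const (a := (0:ℝ)) (b := t) (C := 1)
      (f := fun s => Pf E s (eastGen E.p fun ω => G (XN N ω)) ω)
      (fun s _ => Pf_bound E hb s ω)
    rw [sub_zero, one_mul, abs_of_nonneg ht] at this
    exact (le_abs_self _).trans this
  change Pf E t (fun η => G (XN N η)) ω ≤ G (XN N ω) + t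
  linarith

lemma sqmom (N : ℕ) {t : ℝ} (ht : 0 ≤ t) {ω : Config} (hω : XN N ω = 0) :
    Pf E t (fun η => (XN N η : ℝ) ^ 2) ω ≤ t * (2 * t + 1) := by
  let G : ℤ → ℝ := fun m => (m:ℝ) ^ 2
  let H : ℤ → ℝ := fun m => 2 * |(m:ℝ)| + 1
  have hb := gen_le E N G H
    (fun m => by
      simp only [G, H]; push_cast
      rw [abs_le]
      constructor <;> nlinarith [neg_abs_le (m:ℝ), le_abs_self (m:ℝ)])
    (fun m => by
      simp only [G, H]; push_cast
      rw [abs_le]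
      constructor <;> nlinarith [neg_abs_le (m:ℝ), le_abs_self (m:ℝ)])
  have h := dynkin E (XN_comp_cyl N G) ht ω
  have h1 : ∫ s in (0:ℝ)..t, Pf E s (eastGen E.p fun ω => G (XN N ω)) ω ≤ t * (2 * t + 1) := by
    have := intervalIntegral.norm_integral_le_of_norm_le_const (a := (0:ℝ)) (b := t)
      (C := 2 * t + 1)
      (f := fun s => Pf E s (eastGen E.p fun ω => G (XN N ω)) ω)
      (fun s hs => by
        rw [Set.uIoc_of_le ht] at hs
        have h2 : |Pf E s (eastGen E.p fun ω => G (XN N ω)) ω| ≤ Pf E s (fun η => H (XN N η)) ω := by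
          refine (abs_integral_le_integral_abs).trans ?_
          exact Pf_mono E (eastGen_cyl_cont E.p (XN_comp_cyl N G)).abs (cont_XN_comp N H) hb s ω
        have h3 : Pf E s (fun η => H (XN N η)) ω =
            2 * Pf E s (fun η => |(XN N η : ℝ)|) ω + 1 := by
          unfold Pf
          simp only [H]
          rw [integral_add, integral_const_mul]
          · simp
          · exact (integrable_cont (cont_XN_comp N (fun m => |(m:ℝ)|))).const_mul 2
          · exact integrable_const _
        have h4 := absmom E N hs.1.le ω
        rw [hω] at h4
        simp only [Int.cast_zero, abs_zero, zero_add] at h4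
        rw [Real.norm_eq_abs]
        linarith [hs.2])
    rw [sub_zero, abs_of_nonneg ht, mul_comm] at this
    exact (le_abs_self _).trans this
  change Pf E t (fun η => G (XN N η)) ω ≤ _
  have : G (XN N ω) = 0 := by simp [G, hω]
  linarith

end Part2

section Part3
variable (E : EastProcess)

lemma meas_LO : MeasurableSet LO := by
  have h1 : ∀ x : ℤ, ∀ b : Bool, MeasurableSet {ω : Config | ω x = b} := fun x b =>
    measurableSet_eq_fun (measurable_pi_apply x) measurable_const
  have : LO = (⋃ y : ℤ, ⋂ x : ℤ, {ω : Config | x < y → ω x = true}) ∩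
      ⋃ x : ℤ, {ω : Config | ω x = false} := by
    ext ω; simp [LO]
  rw [this]
  refine MeasurableSet.inter (MeasurableSet.iUnion fun y => MeasurableSet.iInter fun x => ?_)
    (MeasurableSet.iUnion fun x => h1 x false)
  by_cases h : x < y
  · simpa [h] using h1 x true
  · simp [h]

lemma ae_LO {t : ℝ} (ht : 0 ≤ t) {ω : Config} (hω : ω ∈ LO) : ∀ᵐ η ∂(E.P t ω), η ∈ LO :=
  (mem_ae_iff_prob_eq_one meas_LO).2 (E.loStable t ht ω hω)

lemma XN_eq_front {η : Config} (h : η ∈ LO) {N : ℕ} (hN : |front η| ≤ N) : XN N η = front η := by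
  obtain ⟨h1, h2⟩ := front_spec h
  rw [abs_le] at hN
  exact XN_unique ⟨hN.1, by omega, fun _ => h1, fun x _ hx => h2 x hx⟩

lemma abs_XN_le {η : Config} (h : η ∈ LO) (N : ℕ) : |XN N η| ≤ |front η| := by
  by_cases hN : |front η| ≤ N
  · rw [XN_eq_front h hN]
  · obtain ⟨a, b, c, d⟩ := XN_spec N η
    rw [abs_le]; constructor <;> omega

lemma eventually_XN {η : Config} (h : η ∈ LO) : ∀ᶠ N : ℕ in atTop, |front η| + 1 ≤ N ∧
    XN N η = front η := by
  filter_upwards [eventually_ge_atTop (|front η| + 1).toNat] with N hN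
  have : |front η| + 1 ≤ N := by omega
  exact ⟨this, XN_eq_front h (by omega)⟩

lemma front_aem {m : Measure Config} (hm : ∀ᵐ η ∂m, η ∈ LO) :
    AEStronglyMeasurable (fun η => (front η : ℝ)) m := by
  refine aestronglyMeasurable_of_tendsto_ae atTop (f := fun N η => (XN N η : ℝ))
    (fun N => (cont_XN_comp N (fun m => (m:ℝ))).aestronglyMeasurable) ?_
  filter_upwards [hm] with η hη
  refine tendsto_const_nhds.congr' ?_
  filter_upwards [eventually_XN hη] with N hN
  rw [hN.2]

lemma LO0_XN {ω : Config} (hω : ω ∈ LO₀) (N : ℕ) : XN N ω = 0 := by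
  have : XN N ω = front ω := XN_eq_front hω.1 (by rw [hω.2]; simp)
  rw [this, hω.2]

lemma front_sq_lint {t : ℝ} (ht : 0 ≤ t) {ω : Config} (hω : ω ∈ LO₀) :
    ∫⁻ η, ENNReal.ofReal ((front η : ℝ) ^ 2) ∂(E.P t ω) ≤ ENNReal.ofReal (t * (2 * t + 1)) := by
  have h1 : ∫⁻ η, ENNReal.ofReal ((front η : ℝ) ^ 2) ∂(E.P t ω) =
      ∫⁻ η, liminf (fun N : ℕ => ENNReal.ofReal ((XN N η : ℝ) ^ 2)) atTop ∂(E.P t ω) := by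
    apply lintegral_congr_ae
    filter_upwards [ae_LO E ht hω.1] with η hη
    symm
    apply Tendsto.liminf_eq
    refine tendsto_const_nhds.congr' ?_
    filter_upwards [eventually_XN hη] with N hN
    rw [hN.2]
  rw [h1]
  refine (lintegral_liminf_le fun N => ?_).trans ?_
  · exact (cont_XN_comp N (fun m => (m:ℝ)^2)).measurable.ennreal_ofReal
  · refine liminf_le_of_frequently_le' (Frequently.of_forall fun N => ?_)
    rw [← ofReal_integral_eq_lintegral_ofReal (integrable_cont (cont_XN_comp N (fun m => (m:ℝ)^2)))
      (Eventually.of_forall fun η => sq_nonneg _)]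
    exact ENNReal.ofReal_le_ofReal (sqmom E N ht (LO0_XN hω N))

lemma front_sq_int {t : ℝ} (ht : 0 ≤ t) {ω : Config} (hω : ω ∈ LO₀) :
    Integrable (fun η => (front η : ℝ) ^ 2) (E.P t ω) := by
  refine ⟨(front_aem (ae_LO E ht hω.1)).pow 2, ?_⟩
  rw [hasFiniteIntegral_iff_ofReal (Eventually.of_forall fun η => sq_nonneg _)]
  exact (front_sq_lint E ht hω).trans_lt ENNReal.ofReal_lt_top

lemma front_sq_le {t : ℝ} (ht : 0 ≤ t) {ω : Config} (hω : ω ∈ LO₀) :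
    ∫ η, (front η : ℝ) ^ 2 ∂(E.P t ω) ≤ t * (2 * t + 1) := by
  have := front_sq_lint E ht hω
  rw [← ofReal_integral_eq_lintegral_ofReal (front_sq_int E ht hω)
    (Eventually.of_forall fun η => sq_nonneg _)] at this
  exact (ENNReal.ofReal_le_ofReal_iff (by positivity)).1 this

/-- truncated re-centering -/
def thN (N : ℕ) (η : Config) : Config := fun x =>
  if x < 0 then true else if x = 0 then false else η (XN N η + x)

lemma thN_cont (N : ℕ) : Continuous (thN N) := by
  refine continuous_pi fun x => ?_
  apply cyl_cont _ (Finset.Icc (-(N:ℤ)) N ∪ Finset.Icc (-(N:ℤ) + x) (N + 1 + x))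
  intro ω ω' h
  have h1 : XN N ω = XN N ω' := XN_dep N ω ω' fun y hy => h y (Finset.mem_union_left _ hy)
  unfold thN
  split_ifs
  · rfl
  · rfl
  · rw [h1]
    apply h
    apply Finset.mem_union_right
    have := XN_spec N ω'
    simp only [Finset.mem_Icc]
    exact ⟨by have := this.1; omega, by have := this.2.1; omega⟩

lemma thN_eq {N : ℕ} {η : Config} (h : XN N η = front η) : thN N η = θL 0 η := by
  ext1 x; simp [thN, θL, h]

lemma θ_aem {m : Measure Config} (hm : ∀ᵐ η ∂m, η ∈ LO) : AEMeasurable (θL 0) m := by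
  let _ : MetricSpace Config := TopologicalSpace.metrizableSpaceMetric Config
  refine aemeasurable_of_tendsto_metrizable_ae atTop (f := fun N => thN N)
    (fun N => (thN_cont N).measurable.aemeasurable) ?_
  filter_upwards [hm] with η hη
  refine tendsto_const_nhds.congr' ?_
  filter_upwards [eventually_XN hη] with N hN
  rw [thN_eq hN.2]

lemma fθ_aem {m : Measure Config} (hm : ∀ᵐ η ∂m, η ∈ LO) {f : Config → ℝ} (hf : Continuous f) :
    AEStronglyMeasurable (fun η => f (θL 0 η)) m :=
  (hf.measurable.comp_aemeasurable (θ_aem hm)).aestronglyMeasurable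

lemma fθ_int {m : Measure Config} [IsFiniteMeasure m] (hm : ∀ᵐ η ∂m, η ∈ LO) {f : Config → ℝ}
    (hf : Continuous f) : Integrable (fun η => f (θL 0 η)) m := by
  obtain ⟨C, -, hC⟩ := exists_bdd hf
  exact Integrable.of_bound (fθ_aem hm hf) C (Eventually.of_forall fun η => hC _)

lemma approx {f : Config → ℝ} (hf : Continuous f) {C : ℝ} (hC : ∀ ω, |f ω| ≤ C) {t : ℝ}
    (ht : 0 ≤ t) {ω : Config} (hω : ω ∈ LO₀) {N : ℕ} (hN : 0 < N) :
    |Pf E t (fun η => f (θL 0 η)) ω - Pf E t (fun η => f (thN N η)) ω| ≤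
      2 * C * (t * (2 * t + 1)) / (N:ℝ) ^ 2 := by
  have hC0 : 0 ≤ C := (abs_nonneg _).trans (hC (fun _ => true))
  have hsub : Pf E t (fun η => f (θL 0 η)) ω - Pf E t (fun η => f (thN N η)) ω =
      ∫ η, (f (θL 0 η) - f (thN N η)) ∂(E.P t ω) :=
    (integral_sub (fθ_int (ae_LO E ht hω.1) hf) (integrable_cont (hf.comp (thN_cont N)))).symm
  rw [hsub]
  have hNp : (0:ℝ) < N := by exact_mod_cast hN
  have h1 : |∫ η, (f (θL 0 η) - f (thN N η)) ∂(E.P t ω)| ≤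
      ∫ η, (2 * C / (N:ℝ)^2) * (front η : ℝ) ^ 2 ∂(E.P t ω) := by
    rw [← Real.norm_eq_abs]
    refine norm_integral_le_of_norm_le ((front_sq_int E ht hω).const_mul _) ?_
    filter_upwards [ae_LO E ht hω.1] with η hη
    by_cases h : |front η| ≤ N
    · rw [thN_eq (XN_eq_front hη h), sub_self, norm_zero]
      positivity
    · have h2 : ‖f (θL 0 η) - f (thN N η)‖ ≤ 2 * C := by
        refine (norm_sub_le _ _).trans ?_
        have a := hC (θL 0 η)
        have b := hC (thN N η)
        rw [Real.norm_eq_abs, Real.norm_eq_abs]; linarith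
      refine h2.trans ?_
      have h3 : (N:ℝ) ≤ |(front η : ℝ)| := by
        have : (N:ℤ) ≤ |front η| := by omega
        have : ((N:ℤ):ℝ) ≤ ((|front η| : ℤ) : ℝ) := by exact_mod_cast this
        simpa using this
      have h4 : (N:ℝ)^2 ≤ (front η : ℝ)^2 := by
        rw [← sq_abs (front η : ℝ)]
        gcongr
      rw [div_mul_eq_mul_div, le_div_iff₀ (by positivity)]
      gcongr
  refine h1.trans ?_
  rw [integral_const_mul, div_mul_eq_mul_div]
  have := front_sq_le E ht hω
  gcongr

/-- retraction on `LO₀` -/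
def retr (η : Config) : Config := fun x => if x < 0 then true else if x = 0 then false else η x

lemma retr_cont : Continuous retr := by
  refine continuous_pi fun x => ?_
  unfold retr
  split_ifs <;> fun_prop

lemma retr_mem (η : Config) : retr η ∈ LO₀ := by
  rw [mem_LO0]
  refine ⟨by simp [retr], fun x hx => by simp [retr, hx]⟩

lemma retr_eq {η : Config} (h : η ∈ LO₀) : retr η = η := by
  obtain ⟨h1, h2⟩ := mem_LO0.1 h
  ext1 x
  unfold retr
  split_ifs with a b
  · rw [h2 x a]
  · rw [b, h1]
  · rfl

lemma retr_θ (η : Config) : retr (θL 0 η) = θL 0 η := by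
  ext1 x
  unfold retr θL
  split_ifs <;> rfl

lemma Qf_cont {f : Config → ℝ} (hf : Continuous f) {t : ℝ} (ht : 0 ≤ t) :
    Continuous fun ω => Pf E t (fun η => f (θL 0 η)) (retr ω) := by
  obtain ⟨C, hC0, hC⟩ := exists_bdd hf
  have hu : TendstoUniformly (fun (N : ℕ) ω => Pf E t (fun η => f (thN N η)) (retr ω))
      (fun ω => Pf E t (fun η => f (θL 0 η)) (retr ω)) atTop := by
    rw [Metric.tendstoUniformly_iff]
    intro ε hε
    have h0 : Tendsto (fun N : ℕ => 2 * C * (t * (2 * t + 1)) / (N:ℝ) ^ 2) atTop (𝓝 0) :=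
      tendsto_const_nhds.div_atTop
        ((tendsto_pow_atTop (by norm_num)).comp tendsto_natCast_atTop_atTop)
    filter_upwards [h0.eventually (gt_mem_nhds hε), eventually_gt_atTop 0] with N hN hN0 ω
    rw [Real.dist_eq]
    exact (approx E hf hC ht (retr_mem ω) hN0).trans_lt hN
  refine hu.continuous (Frequently.of_forall fun N => ?_)
  exact (E.feller t ht _ (hf.comp (thN_cont N))).comp retr_cont

lemma front_shift {η : Config} (h : η ∈ LO) (y : ℤ) :
    shift y η ∈ LO ∧ front (shift y η) = front η - y := by
  obtain ⟨h1, h2⟩ := front_spec h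
  have a : shift y η (front η - y) = false := by simpa [shift] using h1
  have b : ∀ x < front η - y, shift y η x = true := fun x hx => h2 _ (by omega)
  exact ⟨mem_LO a b, front_unique a b⟩

lemma θ_shift {η : Config} (h : η ∈ LO) (y : ℤ) : θL 0 (shift y η) = θL 0 η := by
  ext1 x
  unfold θL
  rw [(front_shift h y).2]
  simp only [shift]
  split_ifs
  · rfl
  · rfl
  · congr 1; ring

lemma θ_eq_shift {η : Config} (h : η ∈ LO) : θL 0 η = shift (front η) η := by
  obtain ⟨h1, h2⟩ := front_spec h
  ext1 x
  unfold θL shift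
  split_ifs with a b
  · rw [h2 _ (by omega)]
  · simp [b, h1]
  · congr 1; ring

lemma shift_meas (y : ℤ) : Measurable (shift y) :=
  measurable_pi_lambda _ fun x => measurable_pi_apply (x + y)

lemma Pf_θ {f : Config → ℝ} (hf : Continuous f) {t : ℝ} (ht : 0 ≤ t) {η : Config} (h : η ∈ LO) :
    Pf E t (fun ζ => f (θL 0 ζ)) (θL 0 η) = Pf E t (fun ζ => f (θL 0 ζ)) η := by
  have hs := ae_LO E ht (front_shift h (front η)).1
  unfold Pf
  rw [θ_eq_shift h]
  rw [E.shiftComm t ht] at hs ⊢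
  rw [integral_map (shift_meas _).aemeasurable (fθ_aem hs hf)]
  apply integral_congr_ae
  filter_upwards [ae_LO E ht h] with ζ hζ
  rw [θ_shift hζ]

lemma Pf_lim {ω : Config} (hω : ω ∈ LO) {t : ℝ} (ht : 0 ≤ t) {F : ℕ → Config → ℝ}
    {f b : Config → ℝ} (hF : ∀ N, Continuous (F N)) (hb : Integrable b (E.P t ω))
    (hbd : ∀ N, ∀ η ∈ LO, |F N η| ≤ b η)
    (hl : ∀ η ∈ LO, ∀ᶠ N in atTop, F N η = f η) :
    Tendsto (fun N => Pf E t (F N) ω) atTop (𝓝 (Pf E t f ω)) := by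
  refine tendsto_integral_of_dominated_convergence b
    (fun N => (hF N).aestronglyMeasurable) hb ?_ ?_
  · intro N
    filter_upwards [ae_LO E ht hω] with η hη using hbd N η hη
  · filter_upwards [ae_LO E ht hω] with η hη
    refine tendsto_const_nhds.congr' ?_
    filter_upwards [hl η hη] with N hN using hN.symm

/-- the local drift -/
def drift (p : ℝ) (η : Config) : ℝ := p * (if η 1 = false then 1 else 0) - (1 - p)

lemma drift_cont (p : ℝ) : Continuous (drift p) := by
  apply cyl_cont _ {1}
  intro ω ω' h
  simp [drift, h 1 (by simp)]

lemma Pfθ_aesm {f : Config → ℝ} (hf : Continuous f) {ω : Config} (hω : ω ∈ LO) :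
    AEStronglyMeasurable (fun s => Pf E s (fun η => f (θL 0 η)) ω)
      (volume.restrict (Set.Ici (0:ℝ))) := by
  obtain ⟨C, hC0, hC⟩ := exists_bdd hf
  refine aestronglyMeasurable_of_tendsto_ae atTop (f := fun N s => Pf E s (fun η => f (thN N η)) ω)
    (fun N => (E.timeCont _ (hf.comp (thN_cont N)) ω).aestronglyMeasurable) ?_
  filter_upwards [ae_restrict_mem measurableSet_Ici] with s hs
  refine Pf_lim E hω hs (b := fun _ => C) (fun N => hf.comp (thN_cont N)) (integrable_const _)
    (fun N η _ => hC _) fun η hη => ?_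
  filter_upwards [eventually_XN hη] with N hN
  rw [thN_eq hN.2]

lemma Pfθ_ii {f : Config → ℝ} (hf : Continuous f) {ω : Config} (hω : ω ∈ LO) {a b : ℝ}
    (ha : 0 ≤ a) (hb : 0 ≤ b) :
    IntervalIntegrable (fun s => Pf E s (fun η => f (θL 0 η)) ω) volume a b := by
  obtain ⟨C, hC0, hC⟩ := exists_bdd hf
  rw [intervalIntegrable_iff]
  have hsub : Set.uIoc a b ⊆ Set.Ici 0 := by
    intro x hx
    rw [Set.uIoc, Set.mem_Ioc] at hx
    exact (le_min ha hb).trans hx.1.le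
  have hfin : IsFiniteMeasure (volume.restrict (Set.uIoc a b)) := by
    unfold Set.uIoc; infer_instance
  refine Integrable.of_bound (C := C) ?_ ?_
  · exact (Pfθ_aesm E hf hω).mono_measure (Measure.restrict_mono hsub le_rfl)
  · exact Eventually.of_forall fun s => Pf_bound E (fun η => hC _) s ω

lemma mean_front {t : ℝ} (ht : 0 ≤ t) {ω : Config} (hω : ω ∈ LO₀) :
    ∫ η in LO, (front η : ℝ) ∂(E.P t ω) =
      ∫ s in (0:ℝ)..t, Pf E s (fun η => drift E.p (θL 0 η)) ω := by
  have h0 : ∫ η in LO, (front η : ℝ) ∂(E.P t ω) = Pf E t (fun η => (front η : ℝ)) ω := by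
    unfold Pf
    rw [Measure.restrict_eq_self_of_ae_mem (ae_LO E ht hω.1)]
  rw [h0]
  have L1 : Tendsto (fun N => Pf E t (fun η => (XN N η : ℝ)) ω) atTop
      (𝓝 (Pf E t (fun η => (front η : ℝ)) ω)) := by
    refine Pf_lim E hω.1 ht (b := fun η => 1 + (front η : ℝ) ^ 2)
      (fun N => cont_XN_comp N (fun m => (m:ℝ)))
      ((integrable_const _).add (front_sq_int E ht hω)) ?_ ?_
    · intro N η hη
      have : |(XN N η : ℝ)| ≤ |(front η : ℝ)| := by exact_mod_cast abs_XN_le hη N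
      refine this.trans ?_
      rw [← sq_abs (front η : ℝ)]
      nlinarith [sq_nonneg (|(front η : ℝ)| - 1)]
    · intro η hη
      filter_upwards [eventually_XN hη] with N hN
      rw [hN.2]
  have hb : ∀ N ω, |eastGen E.p (fun ω => (XN N ω : ℝ)) ω| ≤ 1 := fun N =>
    gen_le E N (fun m => (m:ℝ)) (fun _ => 1) (fun m => by push_cast; simp)
      (fun m => by push_cast; simp)
  have hcyl : ∀ N, IsCylinder (fun ω => (XN N ω : ℝ)) := fun N => XN_comp_cyl N (fun m => (m:ℝ))
  have L2 : Tendsto (fun N => ∫ s in (0:ℝ)..t, Pf E s (eastGen E.p (fun ω => (XN N ω : ℝ))) ω) atTop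
      (𝓝 (∫ s in (0:ℝ)..t, Pf E s (fun η => drift E.p (θL 0 η)) ω)) := by
    refine intervalIntegral.tendsto_integral_filter_of_dominated_convergence (fun _ => 1) ?_ ?_ ?_ ?_
    · exact Eventually.of_forall fun N =>
        (E.timeCont _ (eastGen_cyl_cont E.p (hcyl N)) ω).aestronglyMeasurable
    · exact Eventually.of_forall fun N => Eventually.of_forall fun s _ => Pf_bound E (hb N) s ω
    · exact intervalIntegrable_const
    · refine Eventually.of_forall fun s hs => ?_
      rw [Set.uIoc_of_le ht] at hs
      refine Pf_lim E hω.1 hs.1.le (b := fun _ => 1) (fun N => eastGen_cyl_cont E.p (hcyl N))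
        (integrable_const _) (fun N η _ => hb N η) fun η hη => ?_
      filter_upwards [eventually_XN hη] with N hN
      have hN1 := abs_le.1 (show |front η| ≤ N - 1 by omega)
      have e1 : front η ≤ N := by omega
      have e2 : -(N:ℤ) < front η := by omega
      rw [eastGen_XN E.p N (fun m => (m:ℝ))]
      unfold cR cL drift
      rw [hN.2]
      simp [θL, e1, e2, (front_spec hη).1]
      ring
  refine tendsto_nhds_unique L1 (L2.congr fun N => ?_)
  rw [dynkin E (hcyl N) ht ω, LO0_XN hω]
  simp

end Part3

section Part4

variable (E : EastProcess)

/-- Cesaro averages -/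
def Ces (ω : Config) (T : ℝ) (f : Config → ℝ) : ℝ :=
  (1 / T) * ∫ s in (0:ℝ)..T, Pf E s (fun η => f (θL 0 η)) ω

lemma Ces_bound {ω : Config} {f : Config → ℝ} {C : ℝ} (hC : ∀ η, |f η| ≤ C) {T : ℝ} (hT : 0 < T) :
    |Ces E ω T f| ≤ C := by
  unfold Ces
  have := intervalIntegral.norm_integral_le_of_norm_le_const (a := (0:ℝ)) (b := T) (C := C)
    (f := fun s => Pf E s (fun η => f (θL 0 η)) ω) (fun s _ => Pf_bound E (fun η => hC _) s ω)
  rw [sub_zero, abs_of_pos hT, Real.norm_eq_abs] at this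
  rw [abs_mul, abs_of_pos (by positivity : 0 < 1 / T), one_div, inv_mul_le_iff₀ hT, mul_comm]
  exact this

lemma Ces_lim (ω : Config) {U : Ultrafilter ℝ} (hU : (U : Filter ℝ) ≤ atTop) {f : Config → ℝ}
    (hf : Continuous f) : ∃ l, Tendsto (fun T => Ces E ω T f) U (𝓝 l) := by
  obtain ⟨C, -, hC⟩ := exists_bdd hf
  have : ∀ᶠ T in (U : Filter ℝ), Ces E ω T f ∈ Set.Icc (-C) C := by
    filter_upwards [hU (eventually_gt_atTop 0)] with T hT
    exact abs_le.1 (Ces_bound E hC hT)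
  obtain ⟨l, -, hl⟩ := isCompact_Icc.ultrafilter_le_nhds' (U.map fun T => Ces E ω T f) this
  exact ⟨l, hl⟩

lemma Ces_shift {ω : Config} (hω : ω ∈ LO₀) {f : Config → ℝ} (hf : Continuous f) {t : ℝ}
    (ht : 0 ≤ t) : Tendsto (fun T => Ces E ω T (fun η => Pf E t (fun ζ => f (θL 0 ζ)) (retr η))
      - Ces E ω T f) atTop (𝓝 0) := by
  obtain ⟨C, hC0, hC⟩ := exists_bdd hf
  set a : ℝ → ℝ := fun s => Pf E s (fun η => f (θL 0 η)) ω with ha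
  have hab : ∀ s, |a s| ≤ C := fun s => Pf_bound E (fun η => hC _) s ω
  have key : ∀ s, 0 ≤ s →
      Pf E s (fun η => Pf E t (fun ζ => f (θL 0 ζ)) (retr (θL 0 η))) ω = a (s + t) := by
    intro s hs
    rw [ha]
    simp only
    rw [← Pf_comp' E ht hs ω (fθ_int (ae_LO E (by linarith) hω.1) hf)]
    apply integral_congr_ae
    filter_upwards [ae_LO E hs hω.1] with η hη
    rw [retr_θ, Pf_θ E hf ht hη]
  have hbound : ∀ T : ℝ, 0 < T → ‖Ces E ω T (fun η => Pf E t (fun ζ => f (θL 0 ζ)) (retr η))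
      - Ces E ω T f‖ ≤ 2 * C * t / T := by
    intro T hT
    have e1 : ∫ s in (0:ℝ)..T, Pf E s (fun η => Pf E t (fun ζ => f (θL 0 ζ)) (retr (θL 0 η))) ω
        = ∫ s in t..(T + t), a s := by
      have := intervalIntegral.integral_comp_add_right (a := 0) (b := T) a t
      rw [zero_add] at this
      rw [← this]
      refine intervalIntegral.integral_congr fun s hs => ?_
      rw [Set.uIcc_of_le hT.le] at hs
      exact key s hs.1
    have i1 := Pfθ_ii E hf hω.1 le_rfl ht
    have i2 := Pfθ_ii E hf hω.1 (a := t) (b := T + t) ht (by linarith)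
    have i3 := Pfθ_ii E hf hω.1 (a := 0) (b := T) le_rfl hT.le
    have i4 := Pfθ_ii E hf hω.1 (a := T) (b := T + t) hT.le (by linarith)
    have j1 := intervalIntegral.integral_add_adjacent_intervals i1 i2
    have j2 := intervalIntegral.integral_add_adjacent_intervals i3 i4
    have b1 := intervalIntegral.norm_integral_le_of_norm_le_const (a := (0:ℝ)) (b := t) (C := C)
      (f := a) (fun s _ => hab s)
    have b2 := intervalIntegral.norm_integral_le_of_norm_le_const (a := T) (b := T + t) (C := C)
      (f := a) (fun s _ => hab s)
    rw [sub_zero, abs_of_nonneg ht] at b1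
    rw [add_sub_cancel_left, abs_of_nonneg ht] at b2
    unfold Ces
    rw [e1, ← mul_sub]
    have e2 : (∫ s in t..(T + t), a s) - ∫ s in (0:ℝ)..T, a s =
        (∫ s in T..(T + t), a s) - ∫ s in (0:ℝ)..t, a s := by
      simp only [ha]; linarith
    change ‖1 / T * ((∫ s in t..(T + t), a s) - ∫ s in (0:ℝ)..T, a s)‖ ≤ _
    rw [e2, norm_mul, Real.norm_of_nonneg (by positivity : 0 ≤ 1 / T), one_div, inv_mul_eq_div]
    gcongr
    refine (norm_sub_le _ _).trans ?_
    linarith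
  refine squeeze_zero_norm' (a := fun T => 2 * C * t / T) ?_
    (tendsto_const_nhds.div_atTop tendsto_id)
  filter_upwards [eventually_gt_atTop 0] with T hT using hbound T hT

lemma Ces_add {ω : Config} (hω : ω ∈ LO₀) {f g : Config → ℝ} (hf : Continuous f)
    (hg : Continuous g) {T : ℝ} (hT : 0 < T) :
    Ces E ω T (fun η => f η + g η) = Ces E ω T f + Ces E ω T g := by
  unfold Ces
  rw [← mul_add, ← intervalIntegral.integral_add (Pfθ_ii E hf hω.1 le_rfl hT.le)
    (Pfθ_ii E hg hω.1 le_rfl hT.le)]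
  congr 1
  refine intervalIntegral.integral_congr fun s hs => ?_
  rw [Set.uIcc_of_le hT.le] at hs
  exact integral_add (fθ_int (ae_LO E hs.1 hω.1) hf) (fθ_int (ae_LO E hs.1 hω.1) hg)

lemma Ces_smul {ω : Config} {f : Config → ℝ} (c : ℝ) (T : ℝ) :
    Ces E ω T (fun η => c * f η) = c * Ces E ω T f := by
  unfold Ces Pf
  simp only [integral_const_mul, intervalIntegral.integral_const_mul]
  ring

lemma Ces_nonneg {ω : Config} {f : Config → ℝ} (h : ∀ η, 0 ≤ f η) {T : ℝ} (hT : 0 < T) :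
    0 ≤ Ces E ω T f := by
  unfold Ces
  refine mul_nonneg (by positivity) (intervalIntegral.integral_nonneg hT.le fun s _ => ?_)
  exact integral_nonneg fun η => h _

lemma Ces_one {ω : Config} {T : ℝ} (hT : 0 < T) : Ces E ω T (fun _ => 1) = 1 := by
  unfold Ces Pf
  simp [hT.ne']

lemma exists_limit_measure {ω : Config} (hω : ω ∈ LO₀) {U : Ultrafilter ℝ}
    (hU : (U : Filter ℝ) ≤ atTop) : ∃ m : Measure Config, IsProbabilityMeasure m ∧
      ∀ f : Config → ℝ, Continuous f → Tendsto (fun T => Ces E ω T f) U (𝓝 (∫ η, f η ∂m)) := by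
  have hpos : ∀ᶠ T in (U : Filter ℝ), 0 < T := hU (eventually_gt_atTop 0)
  choose L hL using fun (f : Config → ℝ) (hf : Continuous f) => Ces_lim E ω hU hf
  let lin : C_c(Config, ℝ) →ₗ[ℝ] ℝ :=
    { toFun := fun f => L f f.continuous
      map_add' := fun f g => by
        refine tendsto_nhds_unique (hL _ (f + g).continuous) ?_
        refine ((hL f f.continuous).add (hL g g.continuous)).congr' ?_
        filter_upwards [hpos] with T hT
        exact (Ces_add E hω f.continuous g.continuous hT).symm
      map_smul' := fun c f => by
        refine tendsto_nhds_unique (hL _ (c • f).continuous) ?_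
        refine ((hL f f.continuous).const_mul c).congr fun T => ?_
        exact (Ces_smul E c T).symm }
  let Λ : C_c(Config, ℝ) →ₚ[ℝ] ℝ := PositiveLinearMap.mk₀ lin fun f hf => by
    refine ge_of_tendsto (hL f f.continuous) ?_
    filter_upwards [hpos] with T hT
    exact Ces_nonneg E (fun η => hf η) hT
  let m := RealRMK.rieszMeasure Λ
  have hrep : ∀ f : Config → ℝ, ∀ hf : Continuous f, ∫ η, f η ∂m = L f hf := by
    intro f hf
    exact RealRMK.integral_rieszMeasure Λ
      (CompactlySupportedContinuousMap.continuousMapEquiv ⟨f, hf⟩)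
  have h1 : ∫ _ : Config, (1:ℝ) ∂m = 1 := by
    rw [hrep _ continuous_const]
    refine tendsto_nhds_unique (hL _ continuous_const) ?_
    refine tendsto_const_nhds.congr' ?_
    filter_upwards [hpos] with T hT
    exact (Ces_one E hT).symm
  refine ⟨m, ⟨?_⟩, fun f hf => ?_⟩
  · rw [integral_const, smul_eq_mul, mul_one, measureReal_def] at h1
    rw [← ENNReal.toReal_eq_one_iff]
    exact h1
  · rw [hrep f hf]; exact hL f hf

lemma meas_LO0 : MeasurableSet LO₀ := by
  have : LO₀ = {η | retr η = η} := by
    ext η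
    exact ⟨fun h => retr_eq h, fun h => by
      have h' : retr η = η := h
      rw [← h']; exact retr_mem η⟩
  rw [this]
  exact (isClosed_eq retr_cont continuous_id).measurableSet

lemma limit_LO0 {ω : Config} {U : Ultrafilter ℝ}
    {m : Measure Config} (hm : IsProbabilityMeasure m)
    (h : ∀ f : Config → ℝ, Continuous f → Tendsto (fun T => Ces E ω T f) U (𝓝 (∫ η, f η ∂m))) :
    m LO₀ = 1 := by
  have hmap : m.map retr = m := by
    have : IsProbabilityMeasure (m.map retr) :=
      Measure.isProbabilityMeasure_map retr_cont.measurable.aemeasurable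
    apply ext_of_forall_integral_eq_of_IsFiniteMeasure
    intro f
    rw [integral_map retr_cont.measurable.aemeasurable f.continuous.aestronglyMeasurable]
    refine tendsto_nhds_unique (h _ (f.continuous.comp retr_cont)) ?_
    refine (h f f.continuous).congr fun T => ?_
    unfold Ces
    simp only [retr_θ]
  rw [← hmap, Measure.map_apply retr_cont.measurable meas_LO0]
  have : retr ⁻¹' LO₀ = Set.univ := by
    ext η; simp [retr_mem]
  rw [this, measure_univ]

lemma limit_inv {ω : Config} (hω : ω ∈ LO₀) {U : Ultrafilter ℝ} (hU : (U : Filter ℝ) ≤ atTop)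
    {m : Measure Config} (hm : IsProbabilityMeasure m)
    (h : ∀ f : Config → ℝ, Continuous f → Tendsto (fun T => Ces E ω T f) U (𝓝 (∫ η, f η ∂m)))
    {t : ℝ} (ht : 0 ≤ t) : Qt E t m = m := by
  have hm0 := limit_LO0 E hm h
  have hae : ∀ᵐ η ∂m, η ∈ LO₀ := (mem_ae_iff_prob_eq_one meas_LO0).2 hm0
  unfold Qt
  have hb : ∀ᵐ η ∂(m.bind fun ω => E.P t ω), η ∈ LO := by
    change (m.bind (E.P t)) LOᶜ = 0
    rw [Measure.bind_apply meas_LO.compl (E.P t).aemeasurable]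
    rw [lintegral_eq_zero_iff' ((E.P t).measurable_coe meas_LO.compl).aemeasurable]
    filter_upwards [hae] with η hη
    exact ae_iff.1 (ae_LO E ht hη.1)
  have hprob : IsProbabilityMeasure (m.bind fun ω => E.P t ω) :=
    isProbabilityMeasure_bind (E.P t).aemeasurable (Eventually.of_forall fun η => inferInstance)
  have hp2 : IsProbabilityMeasure ((m.bind fun ω => E.P t ω).map (θL 0)) :=
    Measure.isProbabilityMeasure_map (θ_aem hb)
  apply ext_of_forall_integral_eq_of_IsFiniteMeasure
  intro f
  rw [integral_map (θ_aem hb) f.continuous.aestronglyMeasurable]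
  have e : ∫ η, f (θL 0 η) ∂(m.bind fun ω => E.P t ω) =
      ∫ η, Pf E t (fun ζ => f (θL 0 ζ)) (retr η) ∂m := by
    have hk : ((E.P t).comp (Kernel.const Unit m)) () = m.bind fun ω => E.P t ω := by
      rw [Kernel.comp_apply, Kernel.const_apply]
    have hi := fθ_int hb f.continuous
    rw [← hk] at hi ⊢
    have := Kernel.integral_comp hi
    rw [Kernel.const_apply] at this
    refine this.trans (integral_congr_ae ?_)
    filter_upwards [hae] with η hη
    rw [retr_eq hη]; rfl
  rw [e]
  have t1 := h _ (Qf_cont E f.continuous ht)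
  have t2 := h f f.continuous
  have t3 := (Ces_shift E hω f.continuous ht).mono_left hU
  have := tendsto_nhds_unique (t1.sub t2) t3
  linarith

end Part4

/-- **Convergence of the mean front position** (Step 1 in the proof of Theorem 6.1 of the
paper): if `ν` is the invariant measure of the process seen from the front and
`v = p ν(1 − ω₁) − q`, then for every `ω ∈ LO₀`, `E_ω[X(ω(t))]/t → v` as `t → ∞`. -/
theorem front_mean_speed (E : EastProcess) (hgap : 0 < gap E)
    (ν : Measure Config) (hν : IsProbabilityMeasure ν) (hν0 : ν LO₀ = 1)
    (hinv : ∀ t : ℝ, 0 ≤ t → Qt E t ν = ν)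
    (huniq : ∀ ν' : Measure Config, IsProbabilityMeasure ν' → ν' LO₀ = 1 →
      (∀ t : ℝ, 0 ≤ t → Qt E t ν' = ν') → ν' = ν) :
    ∀ ω ∈ LO₀,
      Tendsto (fun t : ℝ => (1 / t) * ∫ η in LO, (front η : ℝ) ∂(E.P t ω))
        atTop (𝓝 (E.p * (ν {η' : Config | η' 1 = false}).toReal - (1 - E.p))) := by
  intro ω hω
  have hset : MeasurableSet {η' : Config | η' 1 = false} :=
    measurableSet_eq_fun (measurable_pi_apply 1) measurable_const
  have hv : ∫ η, drift E.p η ∂ν = E.p * (ν {η' : Config | η' 1 = false}).toReal - (1 - E.p) := by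
    have h1 : ∀ η : Config, drift E.p η =
        E.p * ({η' : Config | η' 1 = false}.indicator (fun _ => (1:ℝ)) η) - (1 - E.p) := by
      intro η
      by_cases h : η 1 = false <;> simp [drift, h]
    simp_rw [h1]
    rw [integral_sub, integral_const_mul, integral_indicator_const _ hset]
    · simp [measureReal_def]
    · exact ((integrable_const (1:ℝ)).indicator hset).const_mul _
    · exact integrable_const _
  have main : Tendsto (fun T => Ces E ω T (drift E.p)) atTop
      (𝓝 (E.p * (ν {η' : Config | η' 1 = false}).toReal - (1 - E.p))) := by
    rw [tendsto_iff_ultrafilter]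
    intro U hU
    obtain ⟨m, hm, h⟩ := exists_limit_measure E hω hU
    have hmν : m = ν := huniq m hm (limit_LO0 E hm h) fun t ht => limit_inv E hω hU hm h ht
    rw [← hv, ← hmν]
    exact h _ (drift_cont E.p)
  refine main.congr' ?_
  filter_upwards [eventually_ge_atTop 0] with T hT
  rw [mean_front E hT hω]
  rfl

end
end
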